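/- arXiv:2007.10889 — 8 statements merged into one kernel-verified Lean document; each statement's English description precedes it below -/
import Mathlib

section
/- For every finite word α = a_0…a_{n−1} over A (possibly empty), every H ∈ V, and every finite set F ⊆ H, the generalized cylinders Z(α) and Z(α,H,F) are clopen subsets of the full blur shift Σ with the quotient topology. -/
open Set Filter Topology

namespace BlurPaper

/-- The extended alphabet `Ā = A ⊕ V`, where each blurred set `H ∈ V` is regarded
as a new symbol `H̃`. -/
abbrev Symb (A : Type*) (V : Set (Set A)) := A ⊕ {H : Set A // H ∈ V}

/-- `V` is a family of blurred sets: every member is infinite and two distinct members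
have finite intersection. -/
def IsBlurFamily {A : Type*} (V : Set (Set A)) : Prop :=
  (∀ H ∈ V, H.Infinite) ∧ ∀ G ∈ V, ∀ H ∈ V, G ≠ H → (G ∩ H).Finite

/-- The full blur shift `Σ`: sequences over `Ā` such that a blur symbol is followed
by the same blur symbol. -/
def FullBlur (A : Type*) (V : Set (Set A)) : Set (ℕ → Symb A V) :=
  {x | ∀ (i : ℕ) (H : {H : Set A // H ∈ V}), x i = Sum.inr H → x (i + 1) = Sum.inr H}

/-- Generalized cylinder `Z(α)`. -/
def Z (A : Type*) (V : Set (Set A)) (α : List A) : Set (FullBlur A V) :=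
  {x | ∀ i : Fin α.length, x.1 i = Sum.inl (α.get i)}

/-- Generalized cylinder `Z(α, H, F)`. -/
def ZH (A : Type*) (V : Set (Set A)) (α : List A) (H : {H : Set A // H ∈ V})
    (F : Set A) : Set (FullBlur A V) :=
  {x | (∀ i : Fin α.length, x.1 i = Sum.inl (α.get i)) ∧
    (x.1 α.length = Sum.inr H ∨ ∃ a ∈ H.1 \ F, x.1 α.length = Sum.inl a)}

/-- The collection of all generalized cylinders. -/
def Cylinders (A : Type*) (V : Set (Set A)) : Set (Set (FullBlur A V)) :=
  {U | ∃ α : List A, U = Z A V α} ∪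
  {U | ∃ (α : List A) (H : {H : Set A // H ∈ V}) (F : Set A),
    F ⊆ H.1 ∧ F.Finite ∧ U = ZH A V α H F}

/-- The topology on the full blur shift generated by the generalized cylinders. -/
def tau (A : Type*) (V : Set (Set A)) : TopologicalSpace (FullBlur A V) :=
  TopologicalSpace.generateFrom (Cylinders A V)

/-- The shift map on the full blur shift. -/
def shift (A : Type*) (V : Set (Set A)) : FullBlur A V → FullBlur A V :=
  fun x => ⟨fun i => x.1 (i + 1), fun i H h => x.2 (i + 1) H h⟩

/-- The shift map on `A^ℕ`. -/
def shiftSeq (A : Type*) : (ℕ → A) → ℕ → A := fun x i => x (i + 1)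

/-- The prodiscrete topology on `A^ℕ` (product of discrete topologies). -/
def prodDiscrete (A : Type*) : TopologicalSpace (ℕ → A) :=
  @Pi.topologicalSpace ℕ (fun _ => A) fun _ => ⊥

/-- A (classical) shift space over `A`: closed in the prodiscrete topology and
invariant under the shift map. -/
def IsShiftSpace {A : Type*} (Λ : Set (ℕ → A)) : Prop :=
  @IsClosed _ (prodDiscrete A) Λ ∧ ∀ x ∈ Λ, shiftSeq A x ∈ Λ

/-- `w ∈ B(Y)`: the finite word `w` appears as an initial word of some element of `Y`. -/
def InLang {A : Type*} (Y : Set (ℕ → A)) (w : List A) : Prop :=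
  ∃ x ∈ Y, ∀ i : Fin w.length, x i = w.get i

/-- The follower set `F_Y(w) = {a : w a ∈ B(Y)}`. -/
def Fol {A : Type*} (Y : Set (ℕ → A)) (w : List A) : Set A :=
  {a | InLang Y (w ++ [a])}

/-- The predecessor set `P_Y(a) = {b : b a ∈ B(Y)}`. -/
def Pred {A : Type*} (Y : Set (ℕ → A)) (a : A) : Set A :=
  {b | InLang Y [b, a]}

/-- `B₁(Y)`: the set of letters occurring in sequences of `Y`. -/
def letters {A : Type*} (Y : Set (ℕ → A)) : Set A :=
  {a | ∃ x ∈ Y, ∃ i, x i = a}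

/-- The canonical embedding `A^ℕ → Σ`. -/
def embed (A : Type*) (V : Set (Set A)) : (ℕ → A) → FullBlur A V :=
  fun x => ⟨fun i => Sum.inl (x i), fun _ _ h => absurd h (by simp)⟩

/-- The point `(a₀ … a_{n-1} H̃ H̃ H̃ …)` of the full blur shift. -/
def wordBlur {A : Type*} {V : Set (Set A)} (α : List A) (H : {H : Set A // H ∈ V}) :
    FullBlur A V :=
  ⟨fun i => if h : i < α.length then Sum.inl (α.get ⟨i, h⟩) else Sum.inr H, by
    intro i K hK
    by_cases h : i < α.length
    · simp only [dif_pos h] at hK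
      exact absurd hK (by simp)
    · simp only [dif_neg h] at hK
      simp only [dif_neg (by omega : ¬ i + 1 < α.length)]
      exact hK⟩

/-- The boundary `∂Y`: points `(a₀ … a_{n-1} H̃ H̃ …)` with `a₀ … a_{n-1} ∈ B(Y)` and
`F_Y(a₀ … a_{n-1}) ∩ H` infinite. -/
def boundary (A : Type*) (V : Set (Set A)) (Y : Set (ℕ → A)) : Set (FullBlur A V) :=
  {z | ∃ (α : List A) (H : {H : Set A // H ∈ V}),
    z = wordBlur α H ∧ InLang Y α ∧ (Fol Y α ∩ H.1).Infinite}

/-- The blur shift space `Σ_Y = Y ∪ ∂Y` of `Y` with resolution `V`. -/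
def SigmaOf (A : Type*) (V : Set (Set A)) (Y : Set (ℕ → A)) : Set (FullBlur A V) :=
  embed A V '' Y ∪ boundary A V Y

/-- The subspace topology inherited from the full blur shift. -/
def subTau (A : Type*) (V : Set (Set A)) (X : Set (FullBlur A V)) :
    TopologicalSpace X :=
  TopologicalSpace.induced Subtype.val (tau A V)

/-- `V_Λ`: the blurred sets that appear in `Σ_Λ`, i.e. those meeting `B₁(Λ)` in an
infinite set. -/
def VLam (A : Type*) (V : Set (Set A)) (Λ : Set (ℕ → A)) : Set (Set A) :=
  {H | H ∈ V ∧ (letters Λ ∩ H).Infinite}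


/-- The topology on `Ā`: singletons of `A` are open, and the basic neighborhoods of
`H̃` are the sets `(H ∖ F) ∪ {H̃}` with `F ⊆ H` finite. -/
def barTop (A : Type*) (V : Set (Set A)) : TopologicalSpace (Symb A V) :=
  TopologicalSpace.generateFrom
    ({U | ∃ a : A, U = {Sum.inl a}} ∪
      {U | ∃ (H : {H : Set A // H ∈ V}) (F : Set A), F ⊆ H.1 ∧ F.Finite ∧
        U = Sum.inl '' (H.1 \ F) ∪ {Sum.inr H}})

/-- The product topology on `Ā^ℕ`. -/
def prodBarTop (A : Type*) (V : Set (Set A)) : TopologicalSpace (ℕ → Symb A V) :=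
  @Pi.topologicalSpace ℕ (fun _ => Symb A V) fun _ => barTop A V

/-- The canonical projection `Ā^ℕ → Σ` onto canonical representatives of the
equivalence classes of `∼` (a sequence is replaced, from its first blur symbol on,
by that blur symbol repeated forever). -/
noncomputable def quotMap (A : Type*) (V : Set (Set A)) :
    (ℕ → Symb A V) → FullBlur A V := fun x => by
  classical
  exact if h : ∃ i, ∃ H : {H : Set A // H ∈ V}, x i = Sum.inr H then
    ⟨fun i => if i < Nat.find h then x i else x (Nat.find h), by
      intro i K hK
      by_cases hi : i < Nat.find h
      · simp only [if_pos hi] at hK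
        exact absurd ⟨K, hK⟩ (Nat.find_min h hi)
      · simp only [if_neg hi] at hK
        simp only [if_neg (by omega : ¬ i + 1 < Nat.find h)]
        exact hK⟩
  else ⟨x, fun i K hK => absurd ⟨i, K, hK⟩ h⟩

/-- The quotient topology on the full blur shift `Σ ≅ Ā^ℕ/∼`: the topology coinduced
from the product topology on `Ā^ℕ` along the canonical projection. -/
noncomputable def quotTop (A : Type*) (V : Set (Set A)) :
    TopologicalSpace (FullBlur A V) :=
  TopologicalSpace.coinduced (quotMap A V) (prodBarTop A V)

theorem quotMap_inl {A : Type*} {V : Set (Set A)} (x : ℕ → Symb A V) (i : ℕ) (a : A)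
    (h : (quotMap A V x).1 i = Sum.inl a) : x i = Sum.inl a := by
  classical
  unfold quotMap at h
  split_ifs at h with hx
  · by_cases hi : i < Nat.find hx
    · simpa only [if_pos hi] using h
    · obtain ⟨K, hK⟩ := Nat.find_spec hx
      simp only [if_neg hi] at h
      rw [hK] at h
      exact absurd h (by simp)
  · exact h

theorem quotMap_eq {A : Type*} {V : Set (Set A)} (x : ℕ → Symb A V) (i : ℕ)
    (h : ∀ j < i, ∃ a, x j = Sum.inl a) : (quotMap A V x).1 i = x i := by
  classical
  unfold quotMap
  split_ifs with hx
  · by_cases hi : i < Nat.find hx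
    · simp only [if_pos hi]
    · simp only [if_neg hi]
      have : Nat.find hx = i := by
        by_contra hne
        obtain ⟨a, ha⟩ := h (Nat.find hx) (by omega)
        obtain ⟨K, hK⟩ := Nat.find_spec hx
        rw [hK] at ha
        exact absurd ha (by simp)
      rw [this]
  · rfl

theorem isOpen_bar {A : Type*} {V : Set (Set A)} (S : Set (Symb A V))
    (hS : ∀ G : {H : Set A // H ∈ V}, Sum.inr G ∈ S →
      (G.1 ∩ {b | Sum.inl b ∉ S}).Finite) :
    IsOpen[barTop A V] S := by
  letI := barTop A V
  rw [isOpen_iff_mem_nhds]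
  rintro (b | G) hb
  · refine Filter.mem_of_superset (IsOpen.mem_nhds (s := {Sum.inl b})
      (TopologicalSpace.isOpen_generateFrom_of_mem (Or.inl ⟨b, rfl⟩)) rfl) ?_
    rintro _ rfl
    exact hb
  · refine Filter.mem_of_superset (IsOpen.mem_nhds
      (TopologicalSpace.isOpen_generateFrom_of_mem
        (Or.inr ⟨G, _, Set.inter_subset_left, hS G hb, rfl⟩)) (Or.inr rfl)) ?_
    rintro _ (⟨c, ⟨hc, hc'⟩, rfl⟩ | rfl)
    · by_contra hn
      exact hc' ⟨hc, hn⟩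
    · exact hb

theorem isClopen_inl {A : Type*} {V : Set (Set A)} (a : A) :
    @IsClopen _ (barTop A V) {(Sum.inl a : Symb A V)} := by
  letI := barTop A V
  refine ⟨⟨isOpen_bar _ ?_⟩, isOpen_bar _ ?_⟩
  · intro G _
    refine (Set.finite_singleton a).subset ?_
    rintro b ⟨_, hb⟩
    simpa using hb
  · intro G hG
    simp at hG

theorem isClopen_inr {A : Type*} {V : Set (Set A)} (hV : IsBlurFamily V)
    (H : {H : Set A // H ∈ V}) (F : Set A) (hF : F.Finite) :
    @IsClopen _ (barTop A V)
      {s : Symb A V | s = Sum.inr H ∨ ∃ a ∈ H.1 \ F, s = Sum.inl a} := by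
  letI := barTop A V
  refine ⟨⟨isOpen_bar _ ?_⟩, isOpen_bar _ ?_⟩
  · intro G hG
    have hne : G.1 ≠ H.1 := fun h => hG (Or.inl (by rw [Subtype.ext h]))
    refine (hV.2 G.1 G.2 H.1 H.2 hne).subset ?_
    rintro b ⟨hb, hb'⟩
    refine ⟨hb, ?_⟩
    simp at hb'
    exact hb'.1
  · intro G hG
    have hGH : G = H := by simpa using hG
    subst hGH
    refine hF.subset ?_
    rintro b ⟨hb, hb'⟩
    by_contra hn
    exact hb' (Or.inr ⟨b, ⟨hb, hn⟩, rfl⟩)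

theorem preimage_Z {A : Type*} (V : Set (Set A)) (α : List A) :
    quotMap A V ⁻¹' Z A V α =
      ⋂ i : Fin α.length, (fun x : ℕ → Symb A V => x i) ⁻¹' {Sum.inl (α.get i)} := by
  ext x
  simp only [Set.mem_preimage, Set.mem_iInter, Set.mem_singleton_iff]
  constructor
  · intro h i
    exact quotMap_inl x i _ (h i)
  · intro h i
    rw [quotMap_eq, h i]
    intro j hj
    exact ⟨_, h ⟨j, hj.trans i.2⟩⟩

theorem preimage_ZH {A : Type*} (V : Set (Set A)) (α : List A)
    (H : {H : Set A // H ∈ V}) (F : Set A) :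
    quotMap A V ⁻¹' ZH A V α H F = quotMap A V ⁻¹' Z A V α ∩
      (fun x : ℕ → Symb A V => x α.length) ⁻¹'
        {s : Symb A V | s = Sum.inr H ∨ ∃ a ∈ H.1 \ F, s = Sum.inl a} := by
  ext x
  change (_ ∧ _) ↔ (_ ∧ _)
  refine and_congr_right fun h => ?_
  have hx : (quotMap A V x).1 α.length = x α.length :=
    quotMap_eq x _ fun j hj => ⟨_, quotMap_inl x j _ (h ⟨j, hj⟩)⟩
  rw [hx]
  rfl

theorem isClopen_quot {A : Type*} (V : Set (Set A)) (S : Set (FullBlur A V))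
    (h : @IsClopen _ (prodBarTop A V) (quotMap A V ⁻¹' S)) :
    @IsClopen _ (quotTop A V) S := by
  letI := prodBarTop A V
  letI := quotTop A V
  exact ⟨isClosed_coinduced.2 h.1, isOpen_coinduced.2 h.2⟩

theorem isClopen_coord {A : Type*} (V : Set (Set A)) (n : ℕ) (S : Set (Symb A V))
    (h : @IsClopen _ (barTop A V) S) :
    @IsClopen _ (prodBarTop A V) ((fun x : ℕ → Symb A V => x n) ⁻¹' S) := by
  letI := barTop A V
  letI := prodBarTop A V
  have hc : Continuous (fun x : ℕ → Symb A V => x n) := 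
    @continuous_apply ℕ (fun _ => Symb A V) (fun _ => barTop A V) n
  exact h.preimage hc

/-- Every generalized cylinder `Z(α)` and `Z(α,H,F)` (with `F ⊆ H`
finite) is clopen in the quotient topology on the full blur shift. -/
theorem isClopen_cylinders {A : Type*} (V : Set (Set A)) (hV : IsBlurFamily V)
    (α : List A) (H : {H : Set A // H ∈ V}) (F : Set A) (hFH : F ⊆ H.1)
    (hF : F.Finite) :
    @IsClopen _ (quotTop A V) (Z A V α) ∧ @IsClopen _ (quotTop A V) (ZH A V α H F) := by
  have h1 : @IsClopen _ (prodBarTop A V) (quotMap A V ⁻¹' Z A V α) := by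
    rw [preimage_Z]
    letI := prodBarTop A V
    exact isClopen_iInter_of_finite fun i => isClopen_coord V i _ (isClopen_inl _)
  refine ⟨isClopen_quot V _ h1, isClopen_quot V _ ?_⟩
  rw [preimage_ZH]
  exact @IsClopen.inter _ (prodBarTop A V) _ _ h1
    (isClopen_coord V _ _ (isClopen_inr hV H F hF))

end BlurPaper
end

section
/- The full blur shift Σ, with the topology generated by the generalized cylinders, is a Hausdorff topological space. -/
open Set Filter Topology

namespace BlurPaper

lemma aux_mem {A : Type*} {V : Set (Set A)} (α : List A) (a : A) (x : FullBlur A V) :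
    x ∈ Z A V (α ++ [a]) ↔ x ∈ Z A V α ∧ x.1 α.length = Sum.inl a := by
  have key : ∀ β : List A, x ∈ Z A V β ↔ ∀ i (h : i < β.length), x.1 i = Sum.inl β[i] := by
    intro β
    exact ⟨fun h i hi => h ⟨i, hi⟩, fun h i => h i.1 i.2⟩
  rw [key, key]
  constructor
  · intro h
    refine ⟨fun i hi => ?_, ?_⟩
    · have := h i (by simp; omega)
      rwa [List.getElem_append_left hi] at this
    · have := h α.length (by simp)
      simpa using this
  · rintro ⟨h1, h2⟩ i hi
    by_cases h : i < α.length
    · rw [List.getElem_append_left h]; exact h1 i h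
    · have : i = α.length := by simp at hi; omega
      subst this
      simpa using h2

lemma aux_const {A : Type*} {V : Set (Set A)} (x : FullBlur A V) (i : ℕ)
    (H : {H : Set A // H ∈ V}) (h : x.1 i = Sum.inr H) (j : ℕ) (hj : i ≤ j) :
    x.1 j = Sum.inr H := by
  induction j, hj using Nat.le_induction with
  | base => exact h
  | succ k _ ih => exact x.2 k H ih

lemma aux_initial_word {A : Type*} {V : Set (Set A)} (x : FullBlur A V) (n : ℕ)
    (h : ∀ i < n, ∃ a, x.1 i = Sum.inl a) : ∃ α : List A, α.length = n ∧ x ∈ Z A V α := by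
  induction n with
  | zero => exact ⟨[], rfl, fun i => i.elim0⟩
  | succ k ih =>
    obtain ⟨α, hl, hα⟩ := ih fun i hi => h i (by omega)
    obtain ⟨a, ha⟩ := h k (by omega)
    exact ⟨α ++ [a], by simp [hl], (aux_mem α a x).2 ⟨hα, by rw [hl]; exact ha⟩⟩

/-- The full blur shift, with the topology generated by the
generalized cylinders, is Hausdorff. -/
theorem t2Space_fullBlur {A : Type*} (V : Set (Set A)) (hV : IsBlurFamily V) :
    @T2Space (FullBlur A V) (tau A V) := by
  letI := tau A V
  have oZ : ∀ α : List A, IsOpen (Z A V α) := fun α =>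
    TopologicalSpace.isOpen_generateFrom_of_mem (Or.inl ⟨α, rfl⟩)
  have oH : ∀ (α : List A) (H : {H : Set A // H ∈ V}) (F : Set A), F ⊆ H.1 → F.Finite →
      IsOpen (ZH A V α H F) := fun α H F h1 h2 =>
    TopologicalSpace.isOpen_generateFrom_of_mem (Or.inr ⟨α, H, F, h1, h2, rfl⟩)
  have mixed : ∀ (x y : FullBlur A V) (α : List A) (a : A) (H : {H : Set A // H ∈ V}),
      x ∈ Z A V α → y ∈ Z A V α → x.1 α.length = Sum.inl a → y.1 α.length = Sum.inr H →
      ∃ u v : Set (FullBlur A V), IsOpen u ∧ IsOpen v ∧ x ∈ u ∧ y ∈ v ∧ Disjoint u v := by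
    intro x y α a H hx hy hxa hyH
    refine ⟨_, _, oZ (α ++ [a]), oH α H (H.1 ∩ {a}) inter_subset_left
      ((finite_singleton a).inter_of_right _), (aux_mem α a x).2 ⟨hx, hxa⟩,
      ⟨hy, Or.inl hyH⟩, ?_⟩
    rw [Set.disjoint_left]
    rintro z hz ⟨_, hz2⟩
    have hza := ((aux_mem α a z).1 hz).2
    rcases hz2 with h | ⟨b, hb, h⟩
    · rw [hza] at h; cases h
    · rw [hza] at h; cases h
      exact hb.2 ⟨hb.1, rfl⟩
  refine ⟨fun x y hxy => ?_⟩
  have hne : ∃ n, x.1 n ≠ y.1 n := by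
    by_contra! h
    exact hxy (Subtype.ext (funext h))
  classical
  obtain ⟨n, hn, hmin⟩ : ∃ n, x.1 n ≠ y.1 n ∧ ∀ i < n, x.1 i = y.1 i :=
    ⟨Nat.find hne, Nat.find_spec hne, fun i hi => not_not.1 (Nat.find_min hne hi)⟩
  obtain ⟨α, rfl, hx⟩ := aux_initial_word x n (by
    intro i hi
    rcases h : x.1 i with a | H
    · exact ⟨a, rfl⟩
    · exact absurd ((aux_const x i H h n hi.le).trans
        (aux_const y i H ((hmin i hi).symm.trans h) n hi.le).symm) hn)
  have hy : y ∈ Z A V α := fun i => (hmin i i.2).symm.trans (hx i)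
  rcases hxn : x.1 α.length with a | G <;> rcases hyn : y.1 α.length with b | H
  · refine ⟨_, _, oZ (α ++ [a]), oZ (α ++ [b]), (aux_mem α a x).2 ⟨hx, hxn⟩,
      (aux_mem α b y).2 ⟨hy, hyn⟩, ?_⟩
    rw [Set.disjoint_left]
    intro z h1 h2
    have h1 := ((aux_mem α a z).1 h1).2
    have h2 := ((aux_mem α b z).1 h2).2
    exact hn (by rw [hxn, hyn, ← h1, ← h2])
  · exact mixed x y α a H hx hy hxn hyn
  · obtain ⟨u, v, hu, hv, h1, h2, h3⟩ := mixed y x α b G hy hx hyn hxn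
    exact ⟨v, u, hv, hu, h2, h1, h3.symm⟩
  · have hGH : G ≠ H := fun h => hn (by rw [hxn, hyn, h])
    have hfin := hV.2 G.1 G.2 H.1 H.2 fun h => hGH (Subtype.ext h)
    refine ⟨_, _, oH α G (G.1 ∩ H.1) inter_subset_left hfin,
      oH α H (G.1 ∩ H.1) inter_subset_right hfin, ⟨hx, Or.inl hxn⟩, ⟨hy, Or.inl hyn⟩, ?_⟩
    rw [Set.disjoint_left]
    rintro z ⟨_, h1⟩ ⟨_, h2⟩
    rcases h1 with h1 | ⟨a, ha, h1⟩ <;> rcases h2 with h2 | ⟨b, hb, h2⟩ <;>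
      rw [h1] at h2
    · exact hGH (Sum.inr.inj h2)
    · cases h2
    · cases h2
    · cases h2
      exact ha.2 ⟨ha.1, hb.1⟩

end BlurPaper
end

section
/- Every blur shift space Σ_Λ, with the subspace topology inherited from the full blur shift Σ, is a Fréchet–Urysohn space: for every subset S ⊆ Σ_Λ, every point of the closure of S in Σ_Λ is the limit of a sequence of points of S. -/
open Set Filter Topology

namespace BlurPaper

theorem cyl_prefix {A : Type*} {V : Set (Set A)} (x : FullBlur A V) (U : Set (FullBlur A V))
    (hU : U ∈ Cylinders A V) (hx : x ∈ U) (hl : ∀ i, ∃ a, x.1 i = Sum.inl a) :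
    ∃ N, ∀ y : FullBlur A V, (∀ i < N, y.1 i = x.1 i) → y ∈ U := by
  rcases hU with ⟨α, rfl⟩ | ⟨α, H, F, -, -, rfl⟩
  · exact ⟨α.length, fun y hy i => (hy i i.2).trans (hx i)⟩
  · refine ⟨α.length + 1, fun y hy => ⟨fun i => (hy i (by omega)).trans (hx.1 i), ?_⟩⟩
    rw [hy _ (Nat.lt_succ_self _)]
    exact hx.2

theorem cyl_blur {A : Type*} {V : Set (Set A)} (x : FullBlur A V) (U : Set (FullBlur A V))
    (hU : U ∈ Cylinders A V) (hx : x ∈ U) (n : ℕ) (H : {H : Set A // H ∈ V})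
    (hn : x.1 n = Sum.inr H) (hl : ∀ i < n, ∃ a, x.1 i = Sum.inl a) :
    ∃ F : Set A, F.Finite ∧ ∀ y : FullBlur A V, (∀ i < n, y.1 i = x.1 i) →
      (∃ a ∈ H.1 \ F, y.1 n = Sum.inl a) → y ∈ U := by
  have hge : ∀ m, n ≤ m → x.1 m = Sum.inr H := by
    intro m hm
    induction m, hm using Nat.le_induction with
    | base => exact hn
    | succ k _ ih => exact x.2 k H ih
  have hlen : ∀ α : List A, (∀ i : Fin α.length, x.1 i = Sum.inl (α.get i)) → α.length ≤ n := by
    intro α h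
    by_contra hc
    have := h ⟨n, by omega⟩
    simp [hn] at this
  rcases hU with ⟨α, rfl⟩ | ⟨α, G, F, -, hF, rfl⟩
  · have := hlen α hx
    exact ⟨∅, finite_empty, fun y hy _ i => (hy i (by omega)).trans (hx i)⟩
  · have h1 := hlen α hx.1
    refine ⟨F, hF, fun y hy hy2 => ⟨fun i => (hy i (by omega)).trans (hx.1 i), ?_⟩⟩
    rcases h1.lt_or_eq with h | h
    · rw [hy _ h]
      exact hx.2
    · have h2 := hx.2
      rw [h] at h2 ⊢
      rw [hn] at h2
      rcases h2 with h2 | ⟨a, _, h2⟩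
      · cases h2
        exact Or.inr hy2
      · cases h2

/-- The word of length `n` read off a sequence of letters. -/
theorem exists_word {A : Type*} {V : Set (Set A)} (x : FullBlur A V) (n : ℕ)
    (hl : ∀ i < n, ∃ a, x.1 i = Sum.inl a) :
    ∃ α : List A, α.length = n ∧ ∀ i : Fin α.length, x.1 i = Sum.inl (α.get i) := by
  choose f hf using hl
  refine ⟨List.ofFn fun i : Fin n => f i i.2, by simp, fun i => ?_⟩
  rw [hf i (by simpa using i.2)]
  simp

theorem frechetUrysohn_full {A : Type*} (V : Set (Set A)) :
    @FrechetUrysohnSpace (FullBlur A V) (tau A V) := by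
  letI := tau A V
  have hopen : ∀ U ∈ Cylinders A V, IsOpen U :=
    fun U hU => TopologicalSpace.isOpen_generateFrom_of_mem hU
  refine ⟨fun S x hxS => ?_⟩
  by_cases hx : x ∈ S
  · exact ⟨fun _ => x, fun _ => hx, tendsto_const_nhds⟩
  by_cases hl : ∀ i, ∃ a, x.1 i = Sum.inl a
  · have key : ∀ n : ℕ, ∃ y ∈ S, ∀ i < n, y.1 i = x.1 i := by
      intro n
      obtain ⟨α, hα, hxα⟩ := exists_word x n (fun i _ => hl i)
      obtain ⟨y, hy, hyS⟩ := mem_closure_iff.1 hxS _ (hopen _ (Or.inl ⟨α, rfl⟩)) hxα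
      refine ⟨y, hyS, fun i hi => ?_⟩
      exact (hy ⟨i, by omega⟩).trans (hxα ⟨i, by omega⟩).symm
    choose y hyS hy using key
    refine ⟨y, hyS, TopologicalSpace.tendsto_nhds_generateFrom_iff.2 fun U hU hxU => ?_⟩
    obtain ⟨N, hN⟩ := cyl_prefix x U hU hxU hl
    filter_upwards [eventually_ge_atTop N] with n hn
    exact hN _ fun i hi => hy n i (by omega)
  · classical
    push Not at hl
    have hlt := fun i (hi : i < Nat.find hl) => Nat.find_min hl hi
    have hn := Nat.find_spec hl
    set n := Nat.find hl
    push Not at hlt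
    obtain ⟨H, hH⟩ : ∃ H, x.1 n = Sum.inr H := by
      cases h : x.1 n with
      | inl a => exact absurd h (hn a)
      | inr H => exact ⟨H, rfl⟩
    obtain ⟨α, hα, hxα⟩ := exists_word x n hlt
    have hT : {a | a ∈ H.1 ∧ ∃ y ∈ S, (∀ i < n, y.1 i = x.1 i) ∧ y.1 n = Sum.inl a}.Infinite := by
      intro hfin
      obtain ⟨y, hy, hyS⟩ := mem_closure_iff.1 hxS _
        (hopen _ (Or.inr ⟨α, H, _, fun a ha => ha.1, hfin, rfl⟩))
        ⟨hxα, Or.inl (by rw [hα]; exact hH)⟩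
      have hyx : ∀ i < n, y.1 i = x.1 i := fun i hi =>
        (hy.1 ⟨i, by omega⟩).trans (hxα ⟨i, by omega⟩).symm
      have h2 := hy.2
      rw [hα] at h2
      rcases h2 with h2 | ⟨a, ha, h2⟩
      · apply hx
        have : y = x := by
          apply Subtype.ext
          funext i
          rcases lt_or_ge i n with h | h
          · exact hyx i h
          · have : y.1 i = Sum.inr H ∧ x.1 i = Sum.inr H := by
              induction i, h using Nat.le_induction with
              | base => exact ⟨h2, hH⟩
              | succ k _ ih => exact ⟨y.2 k H ih.1, x.2 k H ih.2⟩
            rw [this.1, this.2]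
        exact this ▸ hyS
      · exact ha.2 ⟨ha.1, y, hyS, hyx, h2⟩
    let e := hT.natEmbedding
    have key : ∀ k, ∃ y ∈ S, (∀ i < n, y.1 i = x.1 i) ∧ y.1 n = Sum.inl (e k).1 :=
      fun k => (e k).2.2
    choose y hyS hyx hyn using key
    refine ⟨y, hyS, TopologicalSpace.tendsto_nhds_generateFrom_iff.2 fun U hU hxU => ?_⟩
    obtain ⟨F, hF, hFU⟩ := cyl_blur x U hU hxU n H hH hlt
    have hinj : Function.Injective fun k => (e k).1 :=
      Subtype.val_injective.comp e.injective
    have hev : ∀ᶠ k in atTop, (e k).1 ∉ F := by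
      rw [← Nat.cofinite_eq_atTop]
      exact (hF.preimage hinj.injOn).compl_mem_cofinite
    filter_upwards [hev] with k hk
    exact hFU _ (hyx k) ⟨_, ⟨(e k).2.1, hk⟩, hyn k⟩

/-- Every blur shift space `Σ_Λ`, with the subspace topology
inherited from the full blur shift, is a Fréchet–Urysohn space. -/
theorem frechetUrysohn_sigmaOf {A : Type*} (V : Set (Set A)) (hV : IsBlurFamily V)
    (Λ : Set (ℕ → A)) (hΛ : IsShiftSpace Λ) :
    @FrechetUrysohnSpace (SigmaOf A V Λ) (subTau A V (SigmaOf A V Λ)) := by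
  letI := tau A V
  letI := subTau A V (SigmaOf A V Λ)
  haveI := frechetUrysohn_full V
  exact Topology.IsInducing.frechetUrysohnSpace (f := (Subtype.val : SigmaOf A V Λ → FullBlur A V)) ⟨rfl⟩

end BlurPaper
end

section
/- A set Λ' ⊆ Σ is a blur shift space with resolution V (that is, Λ' = Σ_Λ for some shift space Λ ⊆ A^ℕ) if and only if there exists a shift space Λ ⊆ A^ℕ such that Λ' is the closure of Λ in Σ with respect to the topology generated by the generalized cylinders. -/
open Set Filter Topology

namespace BlurPaper

theorem openNhd {A : Type*} {V : Set (Set A)} (α : List A) (H : {H : Set A // H ∈ V})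
    (U : Set (FullBlur A V)) (hU : TopologicalSpace.GenerateOpen (Cylinders A V) U)
    (hz : wordBlur α H ∈ U) : ∃ F : Set A, F.Finite ∧ ZH A V α H F ⊆ U := by
  have key : ∀ β : List A, (∀ i : Fin β.length,
      (wordBlur α H : FullBlur A V).1 i = Sum.inl (β.get i)) →
      β.length ≤ α.length ∧ ∀ x : FullBlur A V,
        (∀ i : Fin α.length, x.1 i = Sum.inl (α.get i)) →
        ∀ i : Fin β.length, x.1 i = Sum.inl (β.get i) := by
    intro β hβ
    have hlen : β.length ≤ α.length := by
      by_contra hlt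
      have := hβ ⟨α.length, by omega⟩
      simp [wordBlur] at this
    refine ⟨hlen, fun x hx i => ?_⟩
    have h1 := hβ i
    have hi : (i : ℕ) < α.length := lt_of_lt_of_le i.2 hlen
    have h2 := hx ⟨i, hi⟩
    rw [← h1, h2]
    simp only [wordBlur, dif_pos hi]
  induction hU with
  | basic s hs =>
    rcases hs with ⟨β, rfl⟩ | ⟨β, G, F, hFG, hF, rfl⟩
    · exact ⟨∅, finite_empty, fun x hx => (key β hz).2 x hx.1⟩
    · obtain ⟨hb, hc⟩ := hz
      obtain ⟨hlen, hk⟩ := key β hb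
      refine ⟨F, hF, fun x hx => ⟨hk x hx.1, ?_⟩⟩
      rcases hlen.lt_or_eq with hl | hl
      · have h2 := hx.1 ⟨β.length, hl⟩
        have h3 : x.1 β.length = (wordBlur α H : FullBlur A V).1 β.length := by
          rw [h2]; simp only [wordBlur, dif_pos hl]
        rw [h3]; exact hc
      · have hGH : H = G := by
          rw [hl] at hc
          simpa [wordBlur] using hc
        subst hGH
        rw [hl]; exact hx.2
  | univ => exact ⟨∅, finite_empty, fun _ _ => trivial⟩
  | inter s t _ _ hs ht =>
    obtain ⟨F, hF, h1⟩ := hs hz.1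
    obtain ⟨G, hG, h2⟩ := ht hz.2
    refine ⟨F ∪ G, hF.union hG, fun x hx => ⟨h1 ⟨hx.1, ?_⟩, h2 ⟨hx.1, ?_⟩⟩⟩
    · exact hx.2.imp id fun ⟨a, ha, h⟩ => ⟨a, ⟨ha.1, fun h => ha.2 (Or.inl h)⟩, h⟩
    · exact hx.2.imp id fun ⟨a, ha, h⟩ => ⟨a, ⟨ha.1, fun h => ha.2 (Or.inr h)⟩, h⟩
  | sUnion S _ ih =>
    obtain ⟨s, hs, hz⟩ := hz
    obtain ⟨F, hF, h⟩ := ih s hs hz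
    exact ⟨F, hF, h.trans (subset_sUnion_of_mem hs)⟩

theorem mem_of_prefix {A : Type*} {Λ : Set (ℕ → A)} (h : @IsClosed _ (prodDiscrete A) Λ)
    (x : ℕ → A) (hx : ∀ n, ∃ y ∈ Λ, ∀ i < n, y i = x i) : x ∈ Λ := by
  by_contra hn
  letI : TopologicalSpace A := ⊥
  have ho : IsOpen (Λᶜ) := h.isOpen_compl
  obtain ⟨I, u, hu, hs⟩ := isOpen_pi_iff.1 ho x hn
  obtain ⟨y, hy, hyx⟩ := hx (I.sup id + 1)
  refine hs ?_ hy
  intro i hi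
  rw [hyx i (Nat.lt_succ_of_le (Finset.le_sup (f := id) hi))]
  exact (hu i hi).2

theorem exists_form {A : Type*} {V : Set (Set A)} (z : FullBlur A V) :
    (∃ x, z = embed A V x) ∨ ∃ α H, z = wordBlur α H := by
  classical
  by_cases h : ∃ n H, z.1 n = Sum.inr H
  · right
    obtain ⟨H, hH⟩ := Nat.find_spec h
    set n := Nat.find h with hn
    have hlt : ∀ i, i < n → ∃ a, z.1 i = Sum.inl a := by
      intro i hi
      have := Nat.find_min h hi
      cases hz : z.1 i with
      | inl a => exact ⟨a, rfl⟩
      | inr G => exact absurd ⟨G, hz⟩ this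
    choose f hf using hlt
    refine ⟨List.ofFn (fun i : Fin n => f i i.2), H, Subtype.ext (funext fun i => ?_)⟩
    by_cases hi : i < n
    · simp [wordBlur, hi, hf i hi]
    · simp only [wordBlur, List.length_ofFn, dif_neg hi]
      have : ∀ k, z.1 (n + k) = Sum.inr H := by
        intro k
        induction k with
        | zero => exact hH
        | succ k ih => exact z.2 _ _ ih
      have h2 := this (i - n)
      rwa [Nat.add_sub_cancel' (not_lt.1 hi)] at h2
  · left
    have : ∀ i, ∃ a, z.1 i = Sum.inl a := by
      intro i
      cases hz : z.1 i with
      | inl a => exact ⟨a, rfl⟩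
      | inr G => exact absurd ⟨i, G, hz⟩ h
    choose f hf using this
    exact ⟨f, Subtype.ext (funext hf)⟩

theorem inLang_append {A : Type*} {Λ : Set (ℕ → A)} {α : List A} {a : A} :
    InLang Λ (α ++ [a]) ↔ ∃ y ∈ Λ, (∀ i : Fin α.length, y i = α.get i) ∧ y α.length = a := by
  constructor
  · rintro ⟨y, hy, h⟩
    refine ⟨y, hy, fun i => ?_, ?_⟩
    · have := h ⟨i, by simp⟩
      simpa using this
    · have := h ⟨α.length, by simp⟩
      simpa using this
  · rintro ⟨y, hy, h, h2⟩
    refine ⟨y, hy, fun ⟨i, hi⟩ => ?_⟩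
    simp at hi
    rcases hi.lt_or_eq with h3 | rfl
    · have := h ⟨i, h3⟩
      simpa [List.getElem_append, h3] using this
    · simpa using h2

theorem sigma_eq {A : Type*} (V : Set (Set A)) (Λ : Set (ℕ → A)) (hΛ : IsShiftSpace Λ) :
    SigmaOf A V Λ = @closure _ (tau A V) (embed A V '' Λ) := by
  letI := tau A V
  ext z
  rw [mem_closure_iff]
  constructor
  · rintro (hz | ⟨α, H, rfl, -, hinf⟩) U hU hzU
    · exact ⟨z, hzU, hz⟩
    · obtain ⟨F, hF, hFU⟩ := openNhd α H U hU hzU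
      obtain ⟨a, ⟨ha, haH⟩, haF⟩ := hinf.exists_notMem_finite hF
      obtain ⟨y, hy, h1, h2⟩ := inLang_append.1 ha
      refine ⟨embed A V y, hFU ⟨fun i => ?_, Or.inr ⟨a, ⟨haH, haF⟩, ?_⟩⟩, y, hy, rfl⟩
      · simp only [embed, h1 i]
      · simp only [embed, h2]
  · intro h
    rcases exists_form z with ⟨x, rfl⟩ | ⟨α, H, rfl⟩
    · left
      refine ⟨x, mem_of_prefix hΛ.1 x fun n => ?_, rfl⟩
      obtain ⟨_, h1, y, hy, rfl⟩ := h (Z A V (List.ofFn (fun i : Fin n => x i)))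
        (TopologicalSpace.GenerateOpen.basic _ (Or.inl ⟨_, rfl⟩)) (by
          intro i; simp [embed])
      refine ⟨y, hy, fun i hi => ?_⟩
      have := h1 ⟨i, by simpa using hi⟩
      simpa [embed] using this
    · right
      have key : ∀ F : Set A, F ⊆ H.1 → F.Finite → ∃ y ∈ Λ,
          (∀ i : Fin α.length, y i = α.get i) ∧ y α.length ∈ H.1 \ F := by
        intro F hFH hF
        obtain ⟨_, ⟨h1, h2⟩, y, hy, rfl⟩ := h (ZH A V α H F)
          (TopologicalSpace.GenerateOpen.basic _ (Or.inr ⟨_, _, _, hFH, hF, rfl⟩))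
          ⟨fun i => by simp [wordBlur], Or.inl (by simp [wordBlur])⟩
        refine ⟨y, hy, fun i => Sum.inl_injective (h1 i), ?_⟩
        rcases h2 with h2 | ⟨a, ha, h2⟩
        · simp [embed] at h2
        · have : y α.length = a := Sum.inl_injective h2
          rwa [this]
      refine ⟨α, H, rfl, ?_, fun hfin => ?_⟩
      · obtain ⟨y, hy, h1, -⟩ := key ∅ (empty_subset _) finite_empty
        exact ⟨y, hy, h1⟩
      · obtain ⟨y, hy, h1, h2⟩ := key _ inter_subset_right hfin
        exact h2.2 ⟨inLang_append.2 ⟨y, hy, h1, rfl⟩, h2.1⟩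

/-- `Λ' ⊆ Σ` is a blur shift space with resolution `V` if and only
if it is the closure, in the topology generated by the generalized cylinders, of some
shift space `Λ ⊆ A^ℕ`. -/
theorem blurShift_iff_closure {A : Type*} (V : Set (Set A)) (hV : IsBlurFamily V)
    (Λ' : Set (FullBlur A V)) :
    (∃ Λ : Set (ℕ → A), IsShiftSpace Λ ∧ Λ' = SigmaOf A V Λ) ↔
      (∃ Λ : Set (ℕ → A), IsShiftSpace Λ ∧
        Λ' = @closure _ (tau A V) (embed A V '' Λ)) := by
  constructor
  · rintro ⟨Λ, h, rfl⟩
    exact ⟨Λ, h, sigma_eq V Λ h⟩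
  · rintro ⟨Λ, h, rfl⟩
    exact ⟨Λ, h, (sigma_eq V Λ h).symm⟩

end BlurPaper
end

section
/- A set Λ' ⊆ Σ is a blur shift space with resolution V (that is, Λ' = Σ_Λ for some shift space Λ ⊆ A^ℕ) if and only if Λ' is σ-invariant, closed in Σ with respect to the topology generated by the generalized cylinders, and satisfies the infinite-extension property: with Λ := Λ' ∩ A^ℕ, for every finite word a_0…a_{n−1} over A and every H ∈ V, the point (a_0…a_{n−1} H̃ H̃ …) belongs to Λ' if and only if a_0…a_{n−1} ∈ B(Λ) and F_Λ(a_0…a_{n−1}) ∩ H is infinite. -/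
open Set Filter Topology

namespace BlurPaper

theorem aux_closed {A : Type*} {Y : Set (ℕ → A)} (h : @IsClosed _ (prodDiscrete A) Y)
    {x : ℕ → A} (hx : x ∉ Y) : ∃ n : ℕ, ∀ y ∈ Y, ¬ ∀ i < n, y i = x i := by
  letI : TopologicalSpace A := ⊥
  haveI : DiscreteTopology A := ⟨rfl⟩
  have h' : IsClosed Y := h
  have hb := PiNat.isTopologicalBasis_cylinders (fun _ : ℕ => A)
  obtain ⟨t, ⟨z, n, rfl⟩, hxt, hts⟩ := hb.exists_subset_of_mem_open
    (show x ∈ Yᶜ from hx) h'.isOpen_compl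
  refine ⟨n, fun y hy hh => hts (a := y) ?_ hy⟩
  intro i hi
  rw [hh i hi]
  exact hxt i hi

theorem aux_cont (A : Type*) (V : Set (Set A)) :
    @Continuous _ _ (prodDiscrete A) (tau A V) (embed A V) := by
  letI : TopologicalSpace A := ⊥
  haveI : DiscreteTopology A := ⟨rfl⟩
  have key : ∀ (i : ℕ) (S : Set A), IsOpen {x : ℕ → A | x i ∈ S} := fun i S =>
    (isOpen_discrete S).preimage (continuous_apply i)
  have keyZ : ∀ α : List A, IsOpen (embed A V ⁻¹' Z A V α) := by
    intro α
    have : embed A V ⁻¹' Z A V α = ⋂ i : Fin α.length, {x : ℕ → A | x i ∈ ({α.get i} : Set A)} := by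
      ext x; simp [Z, embed]
    rw [this]
    exact isOpen_iInter_of_finite fun i => key _ _
  refine continuous_generateFrom_iff.2 ?_
  rintro U (⟨α, rfl⟩ | ⟨α, H, F, -, -, rfl⟩)
  · exact keyZ α
  · have : embed A V ⁻¹' ZH A V α H F =
        embed A V ⁻¹' Z A V α ∩ {x : ℕ → A | x α.length ∈ H.1 \ F} := by
      ext x; simp [Z, ZH, embed]
    rw [this]
    exact (keyZ α).inter (key _ _)

theorem aux_cases {A : Type*} {V : Set (Set A)} (x : FullBlur A V) :
    (∃ y, x = embed A V y) ∨ ∃ α H, x = wordBlur α H := by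
  classical
  by_cases h : ∃ n H, x.1 n = Sum.inr H
  · right
    obtain ⟨H, hH⟩ := Nat.find_spec h
    have hlt : ∀ i < Nat.find h, ∃ a, x.1 i = Sum.inl a := by
      intro i hi
      have := Nat.find_min h hi
      rcases hx : x.1 i with a | K
      · exact ⟨a, rfl⟩
      · exact absurd ⟨K, hx⟩ this
    have hge : ∀ k, x.1 (Nat.find h + k) = Sum.inr H := by
      intro k
      induction k with
      | zero => exact hH
      | succ k ih => exact x.2 _ _ ih
    choose f hf using fun i : Fin (Nat.find h) => hlt i i.2
    refine ⟨List.ofFn f, H, Subtype.ext (funext fun i => ?_)⟩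
    simp only [wordBlur, List.length_ofFn]
    split_ifs with hi
    · simpa using hf ⟨i, hi⟩
    · obtain ⟨k, rfl⟩ := Nat.exists_eq_add_of_le (not_lt.1 hi)
      exact hge k
  · left
    have : ∀ i, ∃ a, x.1 i = Sum.inl a := by
      intro i
      rcases hx : x.1 i with a | K
      · exact ⟨a, rfl⟩
      · exact absurd ⟨i, K, hx⟩ h
    choose f hf using this
    exact ⟨f, Subtype.ext (funext hf)⟩

theorem wordBlur_lt {A : Type*} {V : Set (Set A)} (α : List A) (H : {H : Set A // H ∈ V})
    {i : ℕ} (h : i < α.length) : (wordBlur α H).1 i = Sum.inl (α.get ⟨i, h⟩) := dif_pos h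

theorem wordBlur_ge {A : Type*} {V : Set (Set A)} (α : List A) (H : {H : Set A // H ∈ V})
    {i : ℕ} (h : ¬ i < α.length) : (wordBlur α H).1 i = Sum.inr H := dif_neg h

theorem wordBlur_inl {A : Type*} {V : Set (Set A)} {α : List A} {H : {H : Set A // H ∈ V}}
    {i : ℕ} {a : A} (h : (wordBlur α H).1 i = Sum.inl a) :
    ∃ hi : i < α.length, α.get ⟨i, hi⟩ = a := by
  by_cases hi : i < α.length
  · rw [wordBlur_lt α H hi] at h
    exact ⟨hi, Sum.inl.inj h⟩
  · rw [wordBlur_ge α H hi] at h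
    cases h

theorem wordBlur_inr {A : Type*} {V : Set (Set A)} {α : List A} {H K : {H : Set A // H ∈ V}}
    {i : ℕ} (h : (wordBlur α H).1 i = Sum.inr K) : α.length ≤ i ∧ H = K := by
  by_cases hi : i < α.length
  · rw [wordBlur_lt α H hi] at h
    cases h
  · rw [wordBlur_ge α H hi] at h
    exact ⟨not_lt.1 hi, Sum.inr.inj h⟩

theorem wordBlur_self {A : Type*} {V : Set (Set A)} (α : List A) (H : {H : Set A // H ∈ V}) :
    wordBlur α H ∈ Z A V α := fun i => wordBlur_lt α H i.2

/-- A boundary or ordinary point of `Σ_Y` lying in a cylinder puts the word in the language. -/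
theorem aux_lang {A : Type*} {V : Set (Set A)} {Y : Set (ℕ → A)} {x : FullBlur A V}
    (hx : x ∈ SigmaOf A V Y) {β : List A} (hβ : x ∈ Z A V β) : InLang Y β := by
  rcases hx with ⟨y, hy, rfl⟩ | ⟨α, H, rfl, ⟨y, hy, hyα⟩, -⟩
  · exact ⟨y, hy, fun i => Sum.inl.inj (hβ i)⟩
  · refine ⟨y, hy, fun i => ?_⟩
    obtain ⟨hi, h⟩ := wordBlur_inl (hβ i)
    rw [← h]
    exact hyα ⟨i, hi⟩

theorem Z_snoc {A : Type*} {V : Set (Set A)} {x : FullBlur A V} {α : List A} {a : A}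
    (h : x ∈ Z A V α) (ha : x.1 α.length = Sum.inl a) : x ∈ Z A V (α ++ [a]) := by
  rintro ⟨i, hi⟩
  simp only [List.length_append, List.length_singleton] at hi
  by_cases h' : i < α.length
  · have := h ⟨i, h'⟩
    simpa [List.getElem_append, h'] using this
  · obtain rfl : i = α.length := by omega
    simpa using ha

theorem wordBlur_inj {A : Type*} {V : Set (Set A)} {α β : List A} {H K : {H : Set A // H ∈ V}}
    (h : wordBlur α H = wordBlur β K) : α = β ∧ H = K := by
  have h1 : (wordBlur α H).1 β.length = Sum.inr K := by
    rw [h]; exact wordBlur_ge _ _ (lt_irrefl _)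
  have h2 : (wordBlur β K).1 α.length = Sum.inr H := by
    rw [← h]; exact wordBlur_ge _ _ (lt_irrefl _)
  obtain ⟨h3, h4⟩ := wordBlur_inr h1
  obtain ⟨h5, -⟩ := wordBlur_inr h2
  refine ⟨List.ext_getElem (le_antisymm h3 h5) fun i hi hi' => ?_, h4⟩
  have := wordBlur_lt α H hi
  rw [h, wordBlur_lt β K hi'] at this
  exact (Sum.inl.inj this).symm

theorem embed_ne_wordBlur {A : Type*} {V : Set (Set A)} {y : ℕ → A} {α : List A}
    {H : {H : Set A // H ∈ V}} (h : embed A V y = wordBlur α H) : False := by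
  have h1 : (embed A V y).1 α.length = Sum.inr H := by
    rw [h]; exact wordBlur_ge _ _ (lt_irrefl _)
  cases h1

theorem embed_mem {A : Type*} {V : Set (Set A)} {Y : Set (ℕ → A)} {y : ℕ → A} :
    embed A V y ∈ SigmaOf A V Y ↔ y ∈ Y := by
  constructor
  · rintro (⟨z, hz, h⟩ | ⟨α, H, h, -⟩)
    · have : z = y := funext fun i => Sum.inl.inj (congrFun (congrArg Subtype.val h) i)
      exact this ▸ hz
    · exact (embed_ne_wordBlur h).elim
  · exact fun h => Or.inl ⟨y, h, rfl⟩

theorem wordBlur_mem {A : Type*} {V : Set (Set A)} {Y : Set (ℕ → A)} {α : List A}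
    {H : {H : Set A // H ∈ V}} :
    wordBlur α H ∈ SigmaOf A V Y ↔ InLang Y α ∧ (Fol Y α ∩ H.1).Infinite := by
  constructor
  · rintro (⟨z, hz, h⟩ | ⟨β, K, h, h'⟩)
    · exact (embed_ne_wordBlur h).elim
    · obtain ⟨rfl, rfl⟩ := wordBlur_inj h
      exact h'
  · exact fun h => Or.inr ⟨α, H, rfl, h⟩

theorem aux_tail {A : Type*} {Y : Set (ℕ → A)} (hs : ∀ x ∈ Y, shiftSeq A x ∈ Y)
    {a : A} {β : List A} (h : InLang Y (a :: β)) : InLang Y β := by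
  obtain ⟨y, hy, h⟩ := h
  exact ⟨_, hs y hy, fun i => h i.succ⟩

theorem aux_shift {A : Type*} {V : Set (Set A)} {Y : Set (ℕ → A)}
    (hs : ∀ x ∈ Y, shiftSeq A x ∈ Y) {x : FullBlur A V} (hx : x ∈ SigmaOf A V Y) :
    shift A V x ∈ SigmaOf A V Y := by
  rcases hx with ⟨y, hy, rfl⟩ | ⟨α, H, rfl, h1, h2⟩
  · exact Or.inl ⟨_, hs y hy, rfl⟩
  · cases α with
    | nil => exact Or.inr ⟨[], H, Subtype.ext (funext fun i => by simp [shift, wordBlur]), h1, h2⟩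
    | cons a β =>
      refine Or.inr ⟨β, H, Subtype.ext (funext fun i => by simp [shift, wordBlur]),
        aux_tail hs h1, h2.mono ?_⟩
      exact fun b hb => ⟨aux_tail hs (a := a) hb.1, hb.2⟩

theorem aux_sigma_closed {A : Type*} {V : Set (Set A)} {Y : Set (ℕ → A)}
    (hY : @IsClosed _ (prodDiscrete A) Y) : @IsClosed _ (tau A V) (SigmaOf A V Y) := by
  letI := tau A V
  refine isOpen_compl_iff.1 (isOpen_iff_forall_mem_open.2 fun x hx => ?_)
  have oZ : ∀ α, IsOpen (Z A V α) := fun α =>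
    TopologicalSpace.isOpen_generateFrom_of_mem (Or.inl ⟨α, rfl⟩)
  rcases aux_cases x with ⟨y, rfl⟩ | ⟨α, H, rfl⟩
  · obtain ⟨n, hn⟩ := aux_closed hY (fun h => hx (embed_mem.2 h))
    refine ⟨Z A V (List.ofFn fun i : Fin n => y i), fun z hz hz' => ?_, oZ _, fun i => ?_⟩
    · obtain ⟨w, hw, h⟩ := aux_lang hz' hz
      refine hn w hw fun i hi => ?_
      simpa using h ⟨i, by simpa using hi⟩
    · simp [embed]
  · by_cases h1 : InLang Y α
    · have h2 : (Fol Y α ∩ H.1).Finite := by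
        by_contra h2
        exact hx (wordBlur_mem.2 ⟨h1, h2⟩)
      refine ⟨ZH A V α H (Fol Y α ∩ H.1), ?_,
        TopologicalSpace.isOpen_generateFrom_of_mem
          (Or.inr ⟨α, H, _, inter_subset_right, h2, rfl⟩),
        wordBlur_self α H, Or.inl (wordBlur_ge _ _ (lt_irrefl _))⟩
      rintro z ⟨hz, h | ⟨a, ha, h⟩⟩ hz'
      · have : z = wordBlur α H := by
          refine Subtype.ext (funext fun i => ?_)
          by_cases hi : i < α.length
          · rw [wordBlur_lt α H hi]; exact hz ⟨i, hi⟩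
          · rw [wordBlur_ge α H hi]
            obtain ⟨k, rfl⟩ := Nat.exists_eq_add_of_le (not_lt.1 hi)
            clear hi
            induction k with
            | zero => exact h
            | succ k ih => exact z.2 _ _ ih
        exact hx (this ▸ hz')
      · exact ha.2 ⟨aux_lang hz' (Z_snoc hz h), ha.1⟩
    · exact ⟨Z A V α, fun z hz hz' => h1 (aux_lang hz' hz), oZ _, wordBlur_self α H⟩

/-- `Λ' ⊆ Σ` is a blur shift space with resolution `V` if and only
if `Λ'` is shift invariant, closed in the topology generated by the generalized
cylinders, and satisfies the infinite-extension property with respect to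
`Λ = Λ' ∩ A^ℕ`. -/
theorem blurShift_iff_invariant_closed_infExt {A : Type*} (V : Set (Set A))
    (hV : IsBlurFamily V) (Λ' : Set (FullBlur A V)) :
    (∃ Λ : Set (ℕ → A), IsShiftSpace Λ ∧ Λ' = SigmaOf A V Λ) ↔
      ((∀ x ∈ Λ', shift A V x ∈ Λ') ∧ @IsClosed _ (tau A V) Λ' ∧
        ∀ (α : List A) (H : {H : Set A // H ∈ V}),
          wordBlur α H ∈ Λ' ↔
            InLang {y : ℕ → A | embed A V y ∈ Λ'} α ∧
              (Fol {y : ℕ → A | embed A V y ∈ Λ'} α ∩ H.1).Infinite) := by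
  constructor
  · rintro ⟨Λ, ⟨hc, hs⟩, rfl⟩
    refine ⟨fun x hx => aux_shift hs hx, aux_sigma_closed hc, fun α H => ?_⟩
    have : {y : ℕ → A | embed A V y ∈ SigmaOf A V Λ} = Λ := Set.ext fun y => embed_mem
    rw [this]
    exact wordBlur_mem
  · rintro ⟨hs, hc, he⟩
    refine ⟨{y : ℕ → A | embed A V y ∈ Λ'}, ⟨?_, fun y hy => hs _ hy⟩, Set.ext fun x => ?_⟩
    · letI := tau A V
      letI := prodDiscrete A
      exact IsClosed.preimage (aux_cont A V) hc
    · rcases aux_cases x with ⟨y, rfl⟩ | ⟨α, H, rfl⟩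
      · rw [embed_mem]; rfl
      · rw [wordBlur_mem]
        exact he α H

end BlurPaper
end

section
/- A blur shift space Σ_Λ, with the subspace topology inherited from the full blur shift Σ, is separable if and only if B_1(Λ), the set of letters of A occurring in sequences of Λ, is countable. -/
open Set Filter Topology

namespace BlurPaper

theorem countable_inLang {A : Type*} {Λ : Set (ℕ → A)} (h : (letters Λ).Countable) :
    {w : List A | InLang Λ w}.Countable := by
  haveI : Countable (letters Λ) := h.to_subtype
  refine (Set.countable_range (List.map (Subtype.val : letters Λ → A))).mono ?_
  rintro w ⟨x, hx, hw⟩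
  rw [Set.range_list_map_coe]
  intro a ha
  obtain ⟨i, rfl⟩ := List.get_of_mem ha
  exact ⟨x, hx, i, hw i⟩

theorem tendsto_embed {A : Type*} (V : Set (Set A)) (x : ℕ → A) (z : ℕ → ℕ → A)
    (hz : ∀ n, ∀ i < n, z n i = x i) :
    Tendsto (fun n => embed A V (z n)) atTop (@nhds _ (tau A V) (embed A V x)) := by
  rw [tau, TopologicalSpace.tendsto_nhds_generateFrom_iff]
  rintro s (⟨α, rfl⟩ | ⟨α, H, F, -, -, rfl⟩) hs
  · filter_upwards [eventually_ge_atTop α.length] with n hn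
    intro i
    have := hs i
    simp only [embed] at this ⊢
    rw [hz n i (by omega), this]
  · filter_upwards [eventually_ge_atTop (α.length + 1)] with n hn
    refine ⟨fun i => ?_, ?_⟩
    · have := hs.1 i
      simp only [embed] at this ⊢
      rw [hz n i (by omega), this]
    · have := hs.2
      simp only [embed] at this ⊢
      rw [hz n α.length (by omega)]
      exact this

theorem tendsto_wordBlur {A : Type*} (V : Set (Set A)) (α : List A)
    (H : {H : Set A // H ∈ V}) (z : ℕ → ℕ → A)
    (hz : ∀ n, ∀ i : Fin α.length, z n i = α.get i)
    (hH : ∀ n, z n α.length ∈ H.1) (hinj : Function.Injective fun n => z n α.length) :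
    Tendsto (fun n => embed A V (z n)) atTop (@nhds _ (tau A V) (wordBlur α H)) := by
  have key : ∀ n, ∀ i < α.length, (embed A V (z n)).1 i = (wordBlur α H : FullBlur A V).1 i := by
    intro n i hi
    simp only [embed, wordBlur, dif_pos hi]
    rw [← hz n ⟨i, hi⟩]
  have len : ∀ β : List A, (∀ i : Fin β.length,
      (wordBlur α H : FullBlur A V).1 i = Sum.inl (β.get i)) → β.length ≤ α.length := by
    intro β hβ
    by_contra hlt
    have := hβ ⟨α.length, by omega⟩
    simp [wordBlur] at this
  rw [tau, TopologicalSpace.tendsto_nhds_generateFrom_iff]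
  rintro s (⟨β, rfl⟩ | ⟨β, G, F, -, hF, rfl⟩) hs
  · refine Eventually.of_forall fun n i => ?_
    have := len β hs
    rw [key n i (by omega)]
    exact hs i
  · have hl := len β hs.1
    have h1 : ∀ n, ∀ i : Fin β.length, (embed A V (z n)).1 i = Sum.inl (β.get i) := by
      intro n i
      rw [key n i (by omega)]
      exact hs.1 i
    rcases hl.lt_or_eq with hlt | heq
    · refine Eventually.of_forall fun n => ⟨h1 n, ?_⟩
      rw [key n _ hlt]
      exact hs.2
    · have h2 := hs.2
      rw [heq] at h2
      have hGH : H = G := by simpa [wordBlur] using h2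
      subst hGH
      have hfin : {n | z n α.length ∈ F}.Finite := hF.preimage hinj.injOn
      have hev : ∀ᶠ n in atTop, z n α.length ∉ F := by
        have := hfin.compl_mem_cofinite
        rw [Nat.cofinite_eq_atTop] at this
        exact this
      filter_upwards [hev] with n hn
      refine ⟨h1 n, Or.inr ⟨z n α.length, ⟨hH n, hn⟩, ?_⟩⟩
      rw [heq]
      rfl

theorem head_letter {A : Type*} {Λ : Set (ℕ → A)} (hΛ : IsShiftSpace Λ) {a : A}
    (ha : a ∈ letters Λ) : ∃ x ∈ Λ, x 0 = a := by
  obtain ⟨x, hx, i, rfl⟩ := ha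
  induction i generalizing x with
  | zero => exact ⟨x, hx, rfl⟩
  | succ n ih => exact ih (shiftSeq A x) (hΛ.2 x hx)

/-- A blur shift space `Σ_Λ`, with the subspace topology, is
separable if and only if `B₁(Λ)` is countable. -/
theorem separable_iff_letters_countable {A : Type*} (V : Set (Set A))
    (hV : IsBlurFamily V) (Λ : Set (ℕ → A)) (hΛ : IsShiftSpace Λ) :
    @TopologicalSpace.SeparableSpace (SigmaOf A V Λ) (subTau A V (SigmaOf A V Λ)) ↔
      (letters Λ).Countable := by
  letI : TopologicalSpace (FullBlur A V) := tau A V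
  change TopologicalSpace.SeparableSpace (SigmaOf A V Λ) ↔ _
  constructor
  · rintro ⟨D, hDc, hD⟩
    have hc : ((fun d : SigmaOf A V Λ => d.1.1 0) '' D).Countable := hDc.image _
    refine (hc.preimage_of_injOn (f := Sum.inl) Sum.inl_injective.injOn).mono ?_
    intro a ha
    obtain ⟨x, hx, hxa⟩ := head_letter hΛ ha
    have hopen : IsOpen (Z A V [a]) :=
      TopologicalSpace.isOpen_generateFrom_of_mem (Or.inl ⟨_, rfl⟩)
    have hopen' : IsOpen ((Subtype.val : SigmaOf A V Λ → FullBlur A V) ⁻¹' Z A V [a]) :=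
      hopen.preimage continuous_subtype_val
    obtain ⟨d, hd, hdD⟩ := hD.inter_open_nonempty _ hopen'
      ⟨⟨embed A V x, Or.inl ⟨x, hx, rfl⟩⟩, by
        intro i
        simp [embed, hxa]⟩
    exact ⟨d, hdD, by simpa using hd ⟨0, by simp⟩⟩
  · intro hc
    haveI : Countable {w : List A // InLang Λ w} := (countable_inLang hc).to_subtype
    choose f hfΛ hf using fun w : {w : List A // InLang Λ w} => w.2
    let g : {w : List A // InLang Λ w} → SigmaOf A V Λ :=
      fun w => ⟨embed A V (f w), Or.inl ⟨f w, hfΛ w, rfl⟩⟩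
    refine ⟨Set.range g, Set.countable_range g, ?_⟩
    rintro ⟨y, ⟨x, hx, rfl⟩ | ⟨α, H, rfl, hα, hinf⟩⟩
    · let w : ℕ → {w : List A // InLang Λ w} := fun n =>
        ⟨List.ofFn (fun i : Fin n => x i), x, hx, fun i => by simp⟩
      refine mem_closure_of_tendsto (b := atTop) (f := fun n => g (w n)) ?_
        (Eventually.of_forall fun n => ⟨_, rfl⟩)
      rw [tendsto_subtype_rng]
      refine tendsto_embed V x (fun n => f (w n)) fun n i hi => ?_
      have := hf (w n) ⟨i, by simpa [w] using hi⟩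
      simpa [w] using this
    · let b := hinf.natEmbedding
      let w : ℕ → {w : List A // InLang Λ w} := fun n => ⟨α ++ [(b n).1], (b n).2.1⟩
      have hlast : ∀ n, f (w n) α.length = (b n).1 := by
        intro n
        have := hf (w n) ⟨α.length, by simp [w]⟩
        simpa [w] using this
      refine mem_closure_of_tendsto (b := atTop) (f := fun n => g (w n)) ?_
        (Eventually.of_forall fun n => ⟨_, rfl⟩)
      rw [tendsto_subtype_rng]
      refine tendsto_wordBlur V α H (fun n => f (w n)) (fun n i => ?_) (fun n => ?_) ?_
      · have := hf (w n) ⟨i, by simp [w]⟩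
        simpa [w] using this
      · simp only [hlast]
        exact (b n).2.2
      · intro m n hmn
        simp only [hlast] at hmn
        exact b.injective (Subtype.ext hmn)

end BlurPaper
end

section
/- A blur shift space Σ_Λ, with the subspace topology inherited from the full blur shift Σ, is first countable if and only if for every H ∈ V_Λ the set H ∩ B_1(Λ) is countable. -/
open Set Filter Topology

namespace BlurPaper

lemma gen_word {A : Type*} {V : Set (Set A)} (α : List A) (H : {H : Set A // H ∈ V})
    (C : Set (FullBlur A V)) (hC : C ∈ Cylinders A V) (hx : wordBlur α H ∈ C) :
    ∃ F : Set A, F ⊆ H.1 ∧ F.Finite ∧ ZH A V α H F ⊆ C := by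
  have key : ∀ (β : List A), (∀ i : Fin β.length,
      (wordBlur α H : FullBlur A V).1 i = Sum.inl (β.get i)) →
      ∀ z : FullBlur A V, (∀ i : Fin α.length, z.1 i = Sum.inl (α.get i)) →
      β.length ≤ α.length ∧ ∀ i : Fin β.length, z.1 i = Sum.inl (β.get i) := by
    intro β h z hz
    have h1 : ∀ i : Fin β.length, ∃ h' : i.1 < α.length, α.get ⟨i, h'⟩ = β.get i := by
      intro i
      have := h i
      simp only [wordBlur] at this
      split_ifs at this with h'
      exact ⟨h', Sum.inl_injective this⟩
    constructor
    · by_contra hlt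
      push Not at hlt
      obtain ⟨h', -⟩ := h1 ⟨α.length, hlt⟩
      simp at h'
    · intro i
      obtain ⟨h', e⟩ := h1 i
      rw [← e]
      exact hz ⟨i, h'⟩
  rcases hC with ⟨β, rfl⟩ | ⟨β, G, F, hF, hFf, rfl⟩
  · refine ⟨∅, by simp, by simp, ?_⟩
    rintro z ⟨hz, -⟩
    exact (key β hx z hz).2
  · obtain ⟨hx1, hx2⟩ := hx
    by_cases hl : β.length < α.length
    · refine ⟨∅, by simp, by simp, ?_⟩
      rintro z ⟨hz, -⟩
      refine ⟨(key β hx1 z hz).2, ?_⟩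
      have e : (wordBlur α H : FullBlur A V).1 β.length = z.1 β.length := by
        rw [hz ⟨_, hl⟩]
        simp [wordBlur, hl]
      rw [← e]
      exact hx2
    · have e : (wordBlur α H : FullBlur A V).1 β.length = Sum.inr H := by
        simp only [wordBlur, dif_neg hl]
      rw [e] at hx2
      have hGH : H = G := by
        rcases hx2 with h | ⟨a, -, h⟩
        · exact Sum.inr_injective h
        · exact absurd h (by simp)
      subst hGH
      refine ⟨F, hF, hFf, ?_⟩
      rintro z ⟨hz, hz2⟩
      obtain ⟨hle, hz'⟩ := key β hx1 z hz
      refine ⟨hz', ?_⟩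
      have : β.length = α.length := by omega
      rw [this]
      exact hz2

lemma mem_ZH {A : Type*} {V : Set (Set A)} (α : List A) (H : {H : Set A // H ∈ V})
    (F : Set A) : wordBlur α H ∈ ZH A V α H F := by
  refine ⟨fun i => ?_, Or.inl ?_⟩ <;> simp [wordBlur]

lemma nhds_word {A : Type*} {V : Set (Set A)} (α : List A) (H : {H : Set A // H ∈ V}) :
    (@nhds _ (tau A V) (wordBlur α H)).HasBasis (fun F : Set A => F ⊆ H.1 ∧ F.Finite)
      (fun F => ZH A V α H F) := by
  letI := tau A V
  refine ⟨fun U => ⟨fun hU => ?_, ?_⟩⟩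
  · obtain ⟨O, hOU, hO, hx⟩ := mem_nhds_iff.1 hU
    suffices ∃ F : Set A, (F ⊆ H.1 ∧ F.Finite) ∧ ZH A V α H F ⊆ O by
      obtain ⟨F, h, h'⟩ := this
      exact ⟨F, h, h'.trans hOU⟩
    clear hOU hU
    have hO' : TopologicalSpace.GenerateOpen (Cylinders A V) O := hO
    clear hO
    induction hO' with
    | basic s hs =>
      obtain ⟨F, h1, h2, h3⟩ := gen_word α H s hs hx
      exact ⟨F, ⟨h1, h2⟩, h3⟩
    | univ => exact ⟨∅, by simp, by simp⟩
    | inter s t _ _ ihs iht =>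
      obtain ⟨F, ⟨h1, h2⟩, h3⟩ := ihs hx.1
      obtain ⟨G, ⟨g1, g2⟩, g3⟩ := iht hx.2
      refine ⟨F ∪ G, ⟨union_subset h1 g1, h2.union g2⟩, ?_⟩
      rintro z ⟨hz, hz2⟩
      refine ⟨h3 ⟨hz, ?_⟩, g3 ⟨hz, ?_⟩⟩
      · exact hz2.imp_right fun ⟨a, ha, h⟩ => ⟨a, ⟨ha.1, fun h' => ha.2 (Or.inl h')⟩, h⟩
      · exact hz2.imp_right fun ⟨a, ha, h⟩ => ⟨a, ⟨ha.1, fun h' => ha.2 (Or.inr h')⟩, h⟩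
    | sUnion S _ ih =>
      obtain ⟨s, hs, hxs⟩ := hx
      obtain ⟨F, h1, h3⟩ := ih s hs hxs
      exact ⟨F, h1, h3.trans (subset_sUnion_of_mem hs)⟩
  · rintro ⟨F, ⟨h1, h2⟩, h3⟩
    refine mem_of_superset (IsOpen.mem_nhds ?_ (mem_ZH α H F)) h3
    exact TopologicalSpace.GenerateOpen.basic _ (Or.inr ⟨α, H, F, h1, h2, rfl⟩)

/-- Points agreeing with `x` on the first `n` coordinates. -/
def agree {A : Type*} {V : Set (Set A)} (x : FullBlur A V) (n : ℕ) : Set (FullBlur A V) :=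
  {z | ∀ i < n, z.1 i = x.1 i}

lemma agree_eq {A : Type*} {V : Set (Set A)} (y : ℕ → A) (n : ℕ) :
    agree (embed A V y) n = Z A V (List.ofFn fun i : Fin n => y i) := by
  ext z
  constructor
  · intro h i
    have := h i (by simpa using i.2)
    simpa [embed] using this
  · intro h i hi
    have := h ⟨i, by simpa using hi⟩
    simpa [embed] using this

lemma nhds_embed {A : Type*} {V : Set (Set A)} (y : ℕ → A) :
    (@nhds _ (tau A V) (embed A V y)).HasBasis (fun _ : ℕ => True)
      (fun n => agree (embed A V y) n) := by
  letI := tau A V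
  refine ⟨fun U => ⟨fun hU => ?_, ?_⟩⟩
  · obtain ⟨O, hOU, hO, hx⟩ := mem_nhds_iff.1 hU
    suffices ∃ n : ℕ, True ∧ agree (embed A V y) n ⊆ O by
      obtain ⟨F, h, h'⟩ := this
      exact ⟨F, h, h'.trans hOU⟩
    clear hOU hU
    have hO' : TopologicalSpace.GenerateOpen (Cylinders A V) O := hO
    clear hO
    induction hO' with
    | basic s hs =>
      rcases hs with ⟨β, rfl⟩ | ⟨β, G, F, hF, hFf, rfl⟩
      · refine ⟨β.length, trivial, fun z hz i => ?_⟩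
        rw [hz i i.2]
        exact hx i
      · refine ⟨β.length + 1, trivial, fun z hz => ⟨fun i => ?_, ?_⟩⟩
        · rw [hz i (by omega)]
          exact hx.1 i
        · rw [hz _ (by omega)]
          exact hx.2
    | univ => exact ⟨0, by simp, by simp⟩
    | inter s t _ _ ihs iht =>
      obtain ⟨n, -, h3⟩ := ihs hx.1
      obtain ⟨m, -, g3⟩ := iht hx.2
      refine ⟨max n m, trivial, fun z hz => ⟨h3 fun i hi => hz i ?_, g3 fun i hi => hz i ?_⟩⟩
      · exact lt_max_of_lt_left hi
      · exact lt_max_of_lt_right hi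
    | sUnion S _ ih =>
      obtain ⟨s, hs, hxs⟩ := hx
      obtain ⟨F, h1, h3⟩ := ih s hs hxs
      exact ⟨F, h1, h3.trans (subset_sUnion_of_mem hs)⟩
  · rintro ⟨n, -, h3⟩
    refine mem_of_superset (IsOpen.mem_nhds ?_ ?_) h3
    · rw [agree_eq]
      exact TopologicalSpace.GenerateOpen.basic _ (Or.inl ⟨_, rfl⟩)
    · exact fun i _ => rfl

lemma mem_letters_of_lang {A : Type*} {Λ : Set (ℕ → A)} {w : List A} (h : InLang Λ w)
    (i : Fin w.length) : w.get i ∈ letters Λ := by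
  obtain ⟨x, hx, hw⟩ := h
  exact ⟨x, hx, i, hw i⟩

lemma fol_subset {A : Type*} (Λ : Set (ℕ → A)) (w : List A) : Fol Λ w ⊆ letters Λ := by
  intro a ha
  have := mem_letters_of_lang ha ⟨w.length, by simp⟩
  simpa using this

lemma sigma_letters {A : Type*} {V : Set (Set A)} {Λ : Set (ℕ → A)} {z : FullBlur A V}
    (hz : z ∈ SigmaOf A V Λ) {i : ℕ} {a : A} (h : z.1 i = Sum.inl a) : a ∈ letters Λ := by
  rcases hz with ⟨y, hy, rfl⟩ | ⟨α, H, rfl, hα, -⟩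
  · exact ⟨y, hy, i, Sum.inl_injective h⟩
  · simp only [wordBlur] at h
    split_ifs at h with h'
    rw [← Sum.inl_injective h]
    exact mem_letters_of_lang hα _

lemma shift_iter {A : Type*} {Λ : Set (ℕ → A)} (hΛ : IsShiftSpace Λ) (i : ℕ) :
    ∀ x ∈ Λ, ∃ y ∈ Λ, y 0 = x i := by
  induction i with
  | zero => exact fun x hx => ⟨x, hx, rfl⟩
  | succ n ih =>
    intro x hx
    exact ih _ (hΛ.2 x hx)

/-- A blur shift space `Σ_Λ`, with the subspace topology, is first
countable if and only if `H ∩ B₁(Λ)` is countable for every `H ∈ V_Λ`. -/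
theorem firstCountable_iff {A : Type*} (V : Set (Set A))
    (hV : IsBlurFamily V) (Λ : Set (ℕ → A)) (hΛ : IsShiftSpace Λ) :
    @FirstCountableTopology (SigmaOf A V Λ) (subTau A V (SigmaOf A V Λ)) ↔
      ∀ H ∈ VLam A V Λ, (H ∩ letters Λ).Countable := by
  letI T := tau A V
  letI S := subTau A V (SigmaOf A V Λ)
  have hnhds : ∀ x : SigmaOf A V Λ, 𝓝 x = comap Subtype.val (𝓝 x.1) :=
    fun x => nhds_induced _ x
  constructor
  · intro hfc H hH
    have hfol : letters Λ ⊆ Fol Λ [] := by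
      rintro a ⟨x, hx, i, rfl⟩
      obtain ⟨y, hy, h⟩ := shift_iter hΛ i x hx
      refine ⟨y, hy, fun j => ?_⟩
      have hj : j = ⟨0, by simp⟩ := by
        ext
        have := j.2
        simp at this
        simpa using this
      subst hj
      simpa using h
    obtain ⟨a0, ⟨x0, hx0, -⟩, -⟩ := hH.2.nonempty
    let p : SigmaOf A V Λ := ⟨wordBlur [] ⟨H, hH.1⟩, Or.inr ⟨[], ⟨H, hH.1⟩, rfl,
      ⟨x0, hx0, fun i => i.elim0⟩, hH.2.mono (inter_subset_inter_left _ hfol)⟩⟩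
    have hb : (𝓝 p).HasBasis (fun F : Set A => F ⊆ H ∧ F.Finite)
        (fun F => Subtype.val ⁻¹' ZH A V [] ⟨H, hH.1⟩ F) := by
      rw [hnhds]
      exact (nhds_word [] ⟨H, hH.1⟩).comap _
    obtain ⟨U, hU⟩ := (𝓝 p).exists_antitone_basis
    have h1 : ∀ n, ∃ F : Set A, (F ⊆ H ∧ F.Finite) ∧
        Subtype.val ⁻¹' ZH A V [] ⟨H, hH.1⟩ F ⊆ U n := fun n =>
      hb.mem_iff.1 (hU.1.mem_of_mem trivial)
    choose F hF hFU using h1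
    refine (countable_iUnion fun n => (hF n).2.countable).mono (s₁ := H ∩ letters Λ) ?_
    rintro a ⟨haH, x, hx, i, hxa⟩
    by_contra hcon
    obtain ⟨y, hy, hy0⟩ := shift_iter hΛ i x hx
    rw [hxa] at hy0
    let q : SigmaOf A V Λ := ⟨embed A V y, Or.inl ⟨y, hy, rfl⟩⟩
    have hmem : Subtype.val ⁻¹' ZH A V [] ⟨H, hH.1⟩ {a} ∈ 𝓝 p :=
      hb.mem_of_mem ⟨by simpa using haH, by simp⟩
    obtain ⟨n, -, hn⟩ := hU.1.mem_iff.1 hmem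
    have hq : q ∈ U n := by
      apply hFU n
      refine ⟨fun i => i.elim0, Or.inr ⟨a, ⟨haH, fun h => hcon (mem_iUnion.2 ⟨n, h⟩)⟩, ?_⟩⟩
      simp [q, embed, hy0]
    obtain ⟨-, h | ⟨b, hb', h⟩⟩ := hn hq
    · simp [q, embed] at h
    · simp [q, embed, hy0] at h
      exact hb'.2 h.symm
  · intro hc
    refine ⟨fun x => ?_⟩
    rw [hnhds]
    obtain ⟨x, ⟨y, hy, rfl⟩ | ⟨α, H, rfl, hα, hinf⟩⟩ := x
    · haveI : (𝓝 (embed A V y)).IsCountablyGenerated :=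
        HasCountableBasis.isCountablyGenerated ⟨nhds_embed y, to_countable _⟩
      infer_instance
    · have hcount : (H.1 ∩ letters Λ).Countable :=
        hc H.1 ⟨H.2, hinf.mono (inter_subset_inter_left _ (fol_subset Λ α))⟩
      have hb : (comap (Subtype.val : SigmaOf A V Λ → _) (𝓝 (wordBlur α H))).HasBasis
          (fun F : Set A => F.Finite ∧ F ⊆ H.1 ∩ letters Λ)
          (fun F => Subtype.val ⁻¹' ZH A V α H F) := by
        refine ((nhds_word α H).comap _).to_hasBasis ?_ ?_
        · rintro F ⟨hF, hFf⟩
          refine ⟨F ∩ letters Λ, ⟨hFf.inter_of_left _, inter_subset_inter_left _ hF⟩, ?_⟩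
          rintro z ⟨hz, hz2⟩
          refine ⟨hz, hz2.imp_right ?_⟩
          rintro ⟨a, ha, h⟩
          exact ⟨a, ⟨ha.1, fun h' => ha.2 ⟨h', sigma_letters z.2 h⟩⟩, h⟩
        · rintro F ⟨hFf, hF⟩
          exact ⟨F, ⟨hF.trans inter_subset_left, hFf⟩, subset_rfl⟩
      exact HasCountableBasis.isCountablyGenerated
        ⟨hb, countable_setOf_finite_subset hcount⟩

end BlurPaper
end

section
/- Suppose the blur shift space Σ_Λ (with the subspace topology inherited from the full blur shift Σ) is first countable and at least one of the following holds: (i) V_Λ is countable; or (ii) for every H ∈ V_Λ the set H ∩ ⋃_{G ∈ V_Λ, G ≠ H} G is finite (each blurred set in V_Λ has only finitely many elements that appear in some other set of V_Λ). Then Σ_Λ is metrizable. -/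
open Set Filter Topology

namespace BlurPaper

/-- Metrizability from countably many discrete clopen families. -/
theorem metrizable_of_families {X ι J : Type*} [Countable ι] (S : Set (Set X))
    (T : TopologicalSpace X) (hT : T = TopologicalSpace.generateFrom S)
    (W : ι → J → Set X)
    (hopen : ∀ i j, @IsOpen X T (W i j))
    (hdisj : ∀ i j j' x, x ∈ W i j → x ∈ W i j' → j = j')
    (hclosed : ∀ i x, (∀ j, x ∉ W i j) → ∃ N, @IsOpen X T N ∧ x ∈ N ∧ ∀ y ∈ N, ∀ j, y ∉ W i j)
    (hbase : ∀ U ∈ S, ∀ x ∈ U, ∃ i j, x ∈ W i j ∧ W i j ⊆ U)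
    (hsep : ∀ x y, (∀ U ∈ S, x ∈ U ↔ y ∈ U) → x = y) :
    @TopologicalSpace.MetrizableSpace X T := by
  letI uJ : UniformSpace (Set J) := ⊥
  haveI : DiscreteTopology (Set J) := ⟨rfl⟩
  haveI : (uniformity (Set J)).IsCountablyGenerated := by
    change (Filter.principal _).IsCountablyGenerated
    infer_instance
  let f : X → ι → Set J := fun x i => {j | x ∈ W i j}
  have hcont : Continuous f := by
    refine continuous_pi fun i => ?_
    refine IsLocallyConstant.continuous (f := fun x => f x i) ?_
    rw [IsLocallyConstant.iff_exists_open]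
    intro x
    by_cases h : ∃ j, x ∈ W i j
    · obtain ⟨j, hj⟩ := h
      refine ⟨W i j, hopen i j, hj, fun y hy => ?_⟩
      ext j'
      constructor
      · intro h'
        have := hdisj i j j' y hy h'
        subst this; exact hj
      · intro h'
        have := hdisj i j j' x hj h'
        subst this; exact hy
    · push Not at h
      obtain ⟨N, hN, hx, hNy⟩ := hclosed i x h
      refine ⟨N, hN, hx, fun y hy => ?_⟩
      ext j'
      exact ⟨fun h' => absurd h' (hNy y hy j'), fun h' => absurd h' (h j')⟩
  have hind : IsInducing f := by
    refine ⟨le_antisymm hcont.le_induced ?_⟩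
    conv_rhs => rw [hT]
    refine le_generateFrom fun U hU => ?_
    refine isOpen_induced_iff.2
      ⟨⋃ i, ⋃ j, ⋃ (_ : W i j ⊆ U), (fun g : ι → Set J => g i) ⁻¹' {s | j ∈ s}, ?_, ?_⟩
    · refine isOpen_iUnion fun i => isOpen_iUnion fun j => isOpen_iUnion fun _ => ?_
      exact (isOpen_discrete _).preimage (continuous_apply (A := fun _ : ι => Set J) i)
    · ext x
      simp only [mem_preimage, mem_iUnion]
      constructor
      · rintro ⟨i, j, hsub, hj⟩
        exact hsub hj
      · intro hx
        obtain ⟨i, j, hj, hsub⟩ := hbase U hU x hx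
        exact ⟨i, j, hsub, hj⟩
  haveI : T0Space X := by
    refine ⟨fun x y hxy => hsep x y fun U hU => ?_⟩
    refine hxy.mem_open_iff ?_
    rw [hT]
    exact TopologicalSpace.isOpen_generateFrom_of_mem hU
  haveI := hind.pseudoMetrizableSpace
  infer_instance

section
variable {A : Type*} {V : Set (Set A)}

theorem mem_Z {α : List A} {x : FullBlur A V} :
    x ∈ Z A V α ↔ ∀ (i : ℕ) (h : i < α.length), x.1 i = Sum.inl α[i] :=
  ⟨fun H i h => H ⟨i, h⟩, fun H i => H i i.2⟩

theorem mem_ZH_s12 {α : List A} {H : {H : Set A // H ∈ V}} {F : Set A} {x : FullBlur A V} :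
    x ∈ ZH A V α H F ↔ x ∈ Z A V α ∧
      (x.1 α.length = Sum.inr H ∨ ∃ a ∈ H.1 \ F, x.1 α.length = Sum.inl a) := Iff.rfl

theorem mem_Z_append {α : List A} {a : A} {x : FullBlur A V} :
    x ∈ Z A V (α ++ [a]) ↔ x ∈ Z A V α ∧ x.1 α.length = Sum.inl a := by
  simp only [mem_Z]
  constructor
  · intro h
    refine ⟨fun i hi => ?_, ?_⟩
    · have := h i (by simp; omega)
      rwa [List.getElem_append_left hi] at this
    · have := h α.length (by simp)
      simpa using this
  · rintro ⟨h1, h2⟩ i hi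
    rcases Nat.lt_or_ge i α.length with h | h
    · rw [List.getElem_append_left h]; exact h1 i h
    · have : i = α.length := by simp at hi; omega
      subst this
      simpa using h2

theorem Z_unique {α β : List A} {x : FullBlur A V} (hl : α.length = β.length)
    (h1 : x ∈ Z A V α) (h2 : x ∈ Z A V β) : α = β := by
  refine List.ext_getElem hl fun i hi hi' => ?_
  have := (mem_Z.1 h1 i hi).symm.trans (mem_Z.1 h2 i hi')
  exact Sum.inl.inj this

theorem inLang_iff {Y : Set (ℕ → A)} {α : List A} :
    InLang Y α ↔ ∃ y ∈ Y, embed A V y ∈ Z A V α := by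
  constructor
  · rintro ⟨y, hy, h⟩
    exact ⟨y, hy, fun i => congrArg Sum.inl (h i)⟩
  · rintro ⟨y, hy, h⟩
    exact ⟨y, hy, fun i => Sum.inl.inj (h i)⟩

theorem wordBlur_mem_Z (α : List A) (H : {H : Set A // H ∈ V}) : wordBlur α H ∈ Z A V α := by
  rw [mem_Z]
  intro i hi
  simp [wordBlur, hi]

theorem wordBlur_length (α : List A) (H : {H : Set A // H ∈ V}) :
    (wordBlur α H).1 α.length = Sum.inr H := by
  simp [wordBlur]

theorem blur_inf {Λ : Set (ℕ → A)} {x : FullBlur A V} (hx : x ∈ SigmaOf A V Λ) {α : List A}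
    {H : {H : Set A // H ∈ V}} (h1 : x ∈ Z A V α) (h2 : x.1 α.length = Sum.inr H) :
    (Fol Λ α ∩ H.1).Infinite := by
  rcases hx with ⟨y, _, rfl⟩ | ⟨β, G, rfl, _, hinf⟩
  · simp [embed] at h2
  · have hle : β.length ≤ α.length := by
      by_contra hc
      rw [mem_Z.1 (wordBlur_mem_Z β G) _ (not_le.1 hc)] at h2
      cases h2
    have hge : α.length ≤ β.length := by
      by_contra hc
      have := mem_Z.1 h1 _ (not_le.1 hc)
      rw [wordBlur_length] at this
      cases this
    have : α = β := Z_unique (le_antisymm hge hle) h1 (wordBlur_mem_Z β G)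
    subst this
    rw [wordBlur_length] at h2
    cases h2
    exact hinf

theorem letter_fol {Λ : Set (ℕ → A)} {x : FullBlur A V} (hx : x ∈ SigmaOf A V Λ) {α : List A}
    {b : A} (h1 : x ∈ Z A V α) (h2 : x.1 α.length = Sum.inl b) : b ∈ Fol Λ α := by
  have h3 := mem_Z_append.2 ⟨h1, h2⟩
  change InLang Λ (α ++ [b])
  rcases hx with ⟨y, hy, rfl⟩ | ⟨β, G, rfl, hl, _⟩
  · exact inLang_iff.2 ⟨y, hy, h3⟩
  · obtain ⟨y, hy, hyβ⟩ := (inLang_iff (V := V)).1 hl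
    refine (inLang_iff (V := V)).2 ⟨y, hy, ?_⟩
    rw [mem_Z] at h3 hyβ ⊢
    intro i hi
    have hiβ : i < β.length := by
      by_contra hc
      have := h3 i hi
      simp [wordBlur, hc] at this
    rw [hyβ i hiβ, ← h3 i hi, mem_Z.1 (wordBlur_mem_Z β G) i hiβ]

theorem fol_letters {Λ : Set (ℕ → A)} {α : List A} : Fol Λ α ⊆ letters Λ := by
  rintro a ⟨y, hy, h⟩
  refine ⟨y, hy, α.length, ?_⟩
  have := h ⟨α.length, by simp⟩
  simpa using this

theorem exists_prefix (x : FullBlur A V) (n : ℕ) :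
    (∃ α : List A, α.length = n ∧ x ∈ Z A V α) ∨ ∃ m < n, ∃ H, x.1 m = Sum.inr H := by
  induction n with
  | zero => exact Or.inl ⟨[], rfl, by rw [mem_Z]; intro i hi; simp at hi⟩
  | succ n ih =>
    rcases ih with ⟨α, rfl, h⟩ | ⟨m, hm, H, h⟩
    · rcases hx : x.1 α.length with a | H
      · exact Or.inl ⟨α ++ [a], by simp, mem_Z_append.2 ⟨h, hx⟩⟩
      · exact Or.inr ⟨α.length, by omega, H, hx⟩
    · exact Or.inr ⟨m, by omega, H, h⟩

theorem blur_const (x : FullBlur A V) {m : ℕ} {H} (h : x.1 m = Sum.inr H) (k : ℕ) :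
    x.1 (m + k) = Sum.inr H := by
  induction k with
  | zero => exact h
  | succ k ih => exact x.2 _ _ ih

theorem blur_sep (x y : FullBlur A V) (h : ∀ U ∈ Cylinders A V, x ∈ U ↔ y ∈ U) : x = y := by
  refine Subtype.ext (funext fun n => ?_)
  induction n using Nat.strong_induction_on with
  | _ n ih =>
  rcases exists_prefix x n with ⟨α, rfl, hα⟩ | ⟨m, hm, H, hH⟩
  · rcases hx : x.1 α.length with a | H
    · have h1 := (h _ (Or.inl ⟨α ++ [a], rfl⟩)).1 (mem_Z_append.2 ⟨hα, hx⟩)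
      exact (mem_Z_append.1 h1).2.symm
    · rcases hy : y.1 α.length with a | G
      · have h0 := (h _ (Or.inl ⟨α, rfl⟩)).1 hα
        have h1 := (h _ (Or.inl ⟨α ++ [a], rfl⟩)).2 (mem_Z_append.2 ⟨h0, hy⟩)
        rw [(mem_Z_append.1 h1).2] at hx
        cases hx
      · have h1 := (h _ (Or.inr ⟨α, H, ∅, empty_subset _, finite_empty, rfl⟩)).1
          (mem_ZH_s12.2 ⟨hα, Or.inl hx⟩)
        rcases (mem_ZH_s12.1 h1).2 with h2 | ⟨a, _, h2⟩
        · rw [← h2, hy]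
        · rw [hy] at h2; cases h2
  · obtain ⟨k, rfl⟩ := Nat.exists_eq_add_of_lt hm
    have h1 := blur_const x hH (k + 1)
    have h2 := blur_const y ((ih m hm).symm.trans hH) (k + 1)
    rw [add_assoc, h1, h2]

theorem subTau_eq (X : Set (FullBlur A V)) : subTau A V X =
    TopologicalSpace.generateFrom (preimage (Subtype.val : X → FullBlur A V) '' Cylinders A V) :=
  induced_generateFrom_eq

theorem open_pre (X : Set (FullBlur A V)) {U : Set (FullBlur A V)} (hU : U ∈ Cylinders A V) :
    @IsOpen X (subTau A V X) (Subtype.val ⁻¹' U) := by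
  rw [subTau_eq]
  exact TopologicalSpace.isOpen_generateFrom_of_mem ⟨U, hU, rfl⟩

theorem fol_countable (Λ : Set (ℕ → A))
    (hfc : @FirstCountableTopology (SigmaOf A V Λ) (subTau A V (SigmaOf A V Λ)))
    (α : List A) (H : {H : Set A // H ∈ V}) (hinf : (Fol Λ α ∩ H.1).Infinite) :
    (Fol Λ α ∩ H.1).Countable := by
  letI := subTau A V (SigmaOf A V Λ)
  have hα : InLang Λ α := by
    obtain ⟨a, ha, _⟩ := hinf.nonempty
    obtain ⟨y, hy, h⟩ := (inLang_iff (V := V)).1 ha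
    exact inLang_iff.2 ⟨y, hy, (mem_Z_append.1 h).1⟩
  let x : SigmaOf A V Λ := ⟨wordBlur α H, Or.inr ⟨α, H, rfl, hα, hinf⟩⟩
  have hy : ∀ a : ↥(Fol Λ α ∩ H.1), ∃ y : SigmaOf A V Λ, y.1 ∈ Z A V (α ++ [a.1]) := by
    rintro ⟨a, ha, _⟩
    obtain ⟨y, hy, h⟩ := (inLang_iff (V := V)).1 ha
    exact ⟨⟨_, Or.inl ⟨y, hy, rfl⟩⟩, h⟩
  choose y hy using hy
  have hag : ∀ a i, i < α.length → (y a).1.1 i = x.1.1 i := by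
    intro a i hi
    rw [mem_Z.1 (mem_Z_append.1 (hy a)).1 i hi, mem_Z.1 (wordBlur_mem_Z α H) i hi]
  have hxn : x.1.1 α.length = Sum.inr H := wordBlur_length α H
  have hle : ∀ β, x.1 ∈ Z A V β → β.length ≤ α.length := by
    intro β hβ
    by_contra hc
    have := mem_Z.1 hβ _ (not_le.1 hc)
    rw [hxn] at this
    cases this
  have hZ : ∀ β, x.1 ∈ Z A V β → ∀ a, (y a).1 ∈ Z A V β := by
    intro β hβ a
    rw [mem_Z]
    intro i hi
    rw [hag a i (lt_of_lt_of_le hi (hle β hβ)), mem_Z.1 hβ i hi]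
  have ht : Tendsto y cofinite (𝓝 x) := by
    have : 𝓝 x = @nhds _ (TopologicalSpace.generateFrom
      (preimage (Subtype.val : SigmaOf A V Λ → FullBlur A V) '' Cylinders A V)) x := by
      rw [← subTau_eq]
    rw [this, TopologicalSpace.tendsto_nhds_generateFrom_iff]
    rintro _ ⟨U, hU, rfl⟩ hxU
    rcases hU with ⟨β, rfl⟩ | ⟨β, G, F, hFG, hF, rfl⟩
    · exact Eventually.of_forall fun a => hZ β hxU a
    · obtain ⟨h1, h2⟩ := mem_ZH_s12.1 hxU
      rcases (hle β h1).lt_or_eq with hlt | heq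
      · refine Eventually.of_forall fun a => mem_ZH_s12.2 ⟨hZ β h1 a, ?_⟩
        rw [hag a _ hlt]; exact h2
      · rw [heq, hxn] at h2
        have hHG : H = G := by
          rcases h2 with h2 | ⟨a, _, h2⟩
          · exact Sum.inr.inj h2
          · cases h2
        subst hHG
        have hfin : {a : ↥(Fol Λ α ∩ H.1) | a.1 ∈ F}.Finite :=
          hF.preimage Subtype.val_injective.injOn
        refine (hfin.compl_mem_cofinite : _ ∈ cofinite) |> fun hm => mem_of_superset hm ?_
        intro a ha
        refine mem_ZH_s12.2 ⟨hZ β h1 a, Or.inr ⟨a.1, ⟨a.2.2, ha⟩, ?_⟩⟩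
        rw [heq]; exact (mem_Z_append.1 (hy a)).2
  obtain ⟨U, hU⟩ := (𝓝 x).exists_antitone_basis
  have hc : (⋃ n, {a | y a ∉ U n}).Countable := by
    refine countable_iUnion fun n => Set.Finite.countable ?_
    exact ht (hU.1.mem_of_mem trivial)
  have huniv : (⋃ n, {a | y a ∉ U n}) = univ := by
    refine eq_univ_of_forall fun a => ?_
    by_contra hcon
    simp only [mem_iUnion, mem_ofPred_eq, not_exists, not_not] at hcon
    have hN : (Subtype.val ⁻¹' ZH A V α H {a.1} : Set (SigmaOf A V Λ)) ∈ 𝓝 x := by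
      refine IsOpen.mem_nhds (open_pre _ (Or.inr ⟨α, H, {a.1}, ?_, finite_singleton _, rfl⟩)) ?_
      · simpa using a.2.2
      · exact mem_ZH_s12.2 ⟨wordBlur_mem_Z α H, Or.inl hxn⟩
    obtain ⟨n, _, hn⟩ := hU.1.mem_iff.1 hN
    have h1 := (mem_ZH_s12.1 (hn (hcon n))).2
    rw [(mem_Z_append.1 (hy a)).2] at h1
    rcases h1 with h1 | ⟨b, hb, h1⟩
    · cases h1
    · cases h1
      exact hb.2 rfl
  rw [huniv, countable_univ_iff] at hc
  exact hc

/-- The color of a word, relative to a rank function. Words are read from the end. -/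
def HasColor (r : List A → A → ℕ) : List ℕ → List A → Prop
  | [], α => α = []
  | k :: s, α => ∃ β a, α = β ++ [a] ∧ HasColor r s β ∧ r β a = k

theorem HasColor.length {r : List A → A → ℕ} {s : List ℕ} {α : List A} (h : HasColor r s α) :
    α.length = s.length := by
  induction s generalizing α with
  | nil => cases h; rfl
  | cons k s ih =>
    obtain ⟨β, a, rfl, h, _⟩ := h
    simp [ih h]

theorem exists_color (r : List A → A → ℕ) (α : List A) : ∃ s, HasColor r s α := by
  induction α using List.reverseRecOn with
  | nil => exact ⟨[], rfl⟩
  | append_singleton β a ih =>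
    obtain ⟨s, hs⟩ := ih
    exact ⟨r β a :: s, β, a, rfl, hs, rfl⟩

theorem main_aux (Λ : Set (ℕ → A)) (t : Set A → ℕ) (r : List A → A → ℕ)
    (ht : ∀ G ∈ VLam A V Λ, ∀ m, (G ∩ ⋃₀ {H | H ∈ VLam A V Λ ∧ H ≠ G ∧ t H = m}).Finite)
    (hr : ∀ α, ∀ H ∈ V, (Fol Λ α ∩ H).Infinite → ∀ k, {a ∈ Fol Λ α ∩ H | r α a = k}.Finite) :
    @TopologicalSpace.MetrizableSpace (SigmaOf A V Λ)
      (subTau A V (SigmaOf A V Λ)) := by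
  have hVL : ∀ α, ∀ H ∈ V, (Fol Λ α ∩ H).Infinite → H ∈ VLam A V Λ := fun α H hH h =>
    ⟨hH, h.mono (inter_subset_inter_left _ fol_letters)⟩
  letI T := subTau A V (SigmaOf A V Λ)
  let K : Set A → Set A := fun G => G ∩ ⋃₀ {H | H ∈ VLam A V Λ ∧ H ≠ G ∧ t H = t G}
  let E : List A → Set A → ℕ → Set A := fun α H l =>
    K H ∪ {a ∈ Fol Λ α ∩ H | r α a ≤ l}
  have hEsub : ∀ α H l, E α H l ⊆ H := by
    rintro α H l a (h | h)
    · exact h.1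
    · exact h.1.2
  have hEfin : ∀ α, ∀ H ∈ V, (Fol Λ α ∩ H).Infinite → ∀ l, (E α H l).Finite := by
    intro α H hH hi l
    refine (ht H (hVL α H hH hi) _).union ?_
    refine ((finite_Iic l).biUnion fun k _ => hr α H hH hi k).subset ?_
    rintro a ⟨ha, hl⟩
    exact mem_biUnion (show r α a ∈ Iic l from hl) ⟨ha, rfl⟩
  let W : List ℕ × Option (ℕ × ℕ) → List A × Option {H : Set A // H ∈ V} →
      Set (SigmaOf A V Λ) := fun i j =>
    match i, j with
    | (s, none), (α, none) => {x | HasColor r s α ∧ x.1 ∈ Z A V α}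
    | (s, some (m, l)), (α, some H) => {x | (HasColor r s α ∧ (Fol Λ α ∩ H.1).Infinite ∧
        t H.1 = m) ∧ x.1 ∈ ZH A V α H (E α H.1 l)}
    | _, _ => ∅
  have hcol : ∀ s (x : SigmaOf A V Λ), (∀ α, HasColor r s α → x.1 ∉ Z A V α) →
      ∃ N : Set (SigmaOf A V Λ), IsOpen N ∧ x ∈ N ∧
        ∀ y ∈ N, ∀ α, HasColor r s α → y.1 ∉ Z A V α := by
    intro s
    induction s with
    | nil =>
      intro x hx
      refine absurd ?_ (hx [] rfl)
      rw [mem_Z]; intro i hi; simp at hi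
    | cons k s ih =>
      intro x hx
      by_cases h : ∃ α, HasColor r s α ∧ x.1 ∈ Z A V α
      · obtain ⟨α, hα, hxα⟩ := h
        have huniq : ∀ β, HasColor r s β → ∀ y : SigmaOf A V Λ, y.1 ∈ Z A V α →
            y.1 ∈ Z A V β → β = α := fun β hβ y h1 h2 =>
          Z_unique (hβ.length.trans hα.length.symm) h2 h1
        rcases hxn : x.1.1 α.length with a | H
        · refine ⟨_, open_pre _ (Or.inl ⟨α ++ [a], rfl⟩), mem_Z_append.2 ⟨hxα, hxn⟩, ?_⟩
          rintro y hy _ ⟨β, b, rfl, hβ, hk⟩ hyβ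
          have hyα := mem_Z_append.1 hy
          have hyβ := mem_Z_append.1 hyβ
          have := huniq β hβ y hyα.1 hyβ.1
          subst this
          have hab := hyα.2.symm.trans hyβ.2
          cases hab
          exact hx _ ⟨β, a, rfl, hβ, hk⟩ (mem_Z_append.2 ⟨hxα, hxn⟩)
        · have hinf := blur_inf x.2 hxα hxn
          refine ⟨_, open_pre _ (Or.inr ⟨α, H, {a ∈ Fol Λ α ∩ H.1 | r α a = k},
            fun a ha => ha.1.2, hr α H.1 H.2 hinf k, rfl⟩), mem_ZH_s12.2 ⟨hxα, Or.inl hxn⟩, ?_⟩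
          rintro y hy _ ⟨β, b, rfl, hβ, hk⟩ hyβ
          have hyα := mem_ZH_s12.1 hy
          have hyβ := mem_Z_append.1 hyβ
          have := huniq β hβ y hyα.1 hyβ.1
          subst this
          rw [hyβ.2] at hyα
          rcases hyα.2 with h1 | ⟨c, hc, h1⟩
          · cases h1
          · cases h1
            exact hc.2 ⟨⟨letter_fol y.2 hyβ.1 hyβ.2, hc.1⟩, hk⟩
      · push Not at h
        obtain ⟨N, hN, hxN, hNy⟩ := ih x h
        refine ⟨N, hN, hxN, ?_⟩
        rintro y hy _ ⟨β, b, rfl, hβ, hk⟩ hyβ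
        exact hNy y hy β hβ (mem_Z_append.1 hyβ).1
  refine metrizable_of_families _ T (subTau_eq _) W ?_ ?_ ?_ ?_ ?_
  · rintro ⟨s, _ | ⟨m, l⟩⟩ ⟨α, _ | H⟩
    · by_cases h : HasColor r s α
      · have := open_pre (SigmaOf A V Λ) (Or.inl ⟨α, rfl⟩)
        convert this using 1
        ext x
        exact ⟨fun h' => h'.2, fun h' => ⟨h, h'⟩⟩
      · simp [W, h]
    · simp [W]
    · simp [W]
    · by_cases h : HasColor r s α ∧ (Fol Λ α ∩ H.1).Infinite ∧ t H.1 = m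
      · have := open_pre (SigmaOf A V Λ)
          (Or.inr ⟨α, H, E α H.1 l, hEsub _ _ _, hEfin α H.1 H.2 h.2.1 l, rfl⟩)
        convert this using 1
        ext x
        exact ⟨fun h' => h'.2, fun h' => ⟨h, h'⟩⟩
      · convert isOpen_empty using 1
        ext x
        exact ⟨fun h' => (h h'.1).elim, fun h' => h'.elim⟩
  · rintro ⟨s, _ | ⟨m, l⟩⟩ ⟨α, _ | H⟩ ⟨β, _ | G⟩ x h1 h2
    · have := Z_unique (h1.1.length.trans h2.1.length.symm) h1.2 h2.2
      rw [this]
    · exact h2.elim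
    · exact h1.elim
    · exact h1.elim
    · exact h1.elim
    · exact h1.elim
    · exact h2.elim
    · obtain ⟨⟨c1, i1, t1⟩, h1⟩ := h1
      obtain ⟨⟨c2, i2, t2⟩, h2⟩ := h2
      have hh1 := mem_ZH_s12.1 h1
      have hh2 := mem_ZH_s12.1 h2
      have := Z_unique (c1.length.trans c2.length.symm) hh1.1 hh2.1
      subst this
      have : H = G := by
        rcases hh1.2 with e1 | ⟨a, ha, e1⟩ <;> rcases hh2.2 with e2 | ⟨b, hb, e2⟩ <;>
          rw [e1] at e2 <;> cases e2
        · rfl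
        · by_contra hne
          refine ha.2 (Or.inl ⟨ha.1, G.1, ⟨hVL _ _ G.2 i2, ?_, t2.trans t1.symm⟩, hb.1⟩)
          exact fun h => hne (Subtype.ext h.symm)
      rw [this]
  · rintro ⟨s, _ | ⟨m, l⟩⟩ x hx
    · obtain ⟨N, hN, hxN, hNy⟩ := hcol s x fun α hα h => hx (α, none) ⟨hα, h⟩
      refine ⟨N, hN, hxN, ?_⟩
      rintro y hy ⟨α, _ | H⟩ h
      · exact hNy y hy α h.1 h.2
      · exact h.elim
    · by_cases h : ∃ α, HasColor r s α ∧ x.1 ∈ Z A V α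
      · obtain ⟨α, hα, hxα⟩ := h
        have huniq : ∀ β, HasColor r s β → ∀ y : SigmaOf A V Λ, y.1 ∈ Z A V α →
            y.1 ∈ Z A V β → β = α := fun β hβ y h1 h2 =>
          Z_unique (hβ.length.trans hα.length.symm) h2 h1
        rcases hxn : x.1.1 α.length with a | G
        · refine ⟨_, open_pre _ (Or.inl ⟨α ++ [a], rfl⟩), mem_Z_append.2 ⟨hxα, hxn⟩, ?_⟩
          rintro y hy ⟨β, _ | H⟩ hyβ
          · exact hyβ.elim
          obtain ⟨hc, hyβ⟩ := hyβ
          have hyα := mem_Z_append.1 hy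
          have hyβ := mem_ZH_s12.1 hyβ
          have := huniq β hc.1 y hyα.1 hyβ.1
          subst this
          refine hx (β, some H) ⟨hc, mem_ZH_s12.2 ⟨hxα, ?_⟩⟩
          rw [hxn, ← hyα.2]
          exact hyβ.2
        · have hinf := blur_inf x.2 hxα hxn
          refine ⟨_, open_pre _ (Or.inr ⟨α, G, _, inter_subset_left,
            ht G.1 (hVL α G.1 G.2 hinf) m, rfl⟩), mem_ZH_s12.2 ⟨hxα, Or.inl hxn⟩, ?_⟩
          rintro y hy ⟨β, _ | H⟩ hyβ
          · exact hyβ.elim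
          obtain ⟨hc, hyβ⟩ := hyβ
          have hyα := mem_ZH_s12.1 hy
          have hyβ := mem_ZH_s12.1 hyβ
          have := huniq β hc.1 y hyα.1 hyβ.1
          subst this
          have hne : H ≠ G := by
            rintro rfl
            exact hx (β, some H) ⟨hc, mem_ZH_s12.2 ⟨hxα, Or.inl hxn⟩⟩
          rcases hyα.2 with e1 | ⟨a, ha, e1⟩ <;> rcases hyβ.2 with e2 | ⟨b, hb, e2⟩ <;>
            rw [e1] at e2 <;> cases e2
          · exact hne rfl
          · exact ha.2 ⟨ha.1, H.1, ⟨hVL _ _ H.2 hc.2.1, fun h => hne (Subtype.ext h), hc.2.2⟩, hb.1⟩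
      · push Not at h
        obtain ⟨N, hN, hxN, hNy⟩ := hcol s x h
        refine ⟨N, hN, hxN, ?_⟩
        rintro y hy ⟨β, _ | H⟩ hyβ
        · exact hyβ.elim
        · exact hNy y hy β hyβ.1.1 (mem_ZH_s12.1 hyβ.2).1
  · have hZ : ∀ α (x : SigmaOf A V Λ), x.1 ∈ Z A V α →
        ∃ i j, x ∈ W i j ∧ W i j ⊆ Subtype.val ⁻¹' Z A V α := by
      intro α x hx
      obtain ⟨s, hs⟩ := exists_color r α
      exact ⟨(s, none), (α, none), ⟨hs, hx⟩, fun y hy => hy.2⟩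
    rintro _ ⟨U, hU, rfl⟩ x hx
    rcases hU with ⟨α, rfl⟩ | ⟨α, H, F, hFH, hF, rfl⟩
    · exact hZ α x hx
    · obtain ⟨hxα, hxn | ⟨a, ha, hxn⟩⟩ := mem_ZH_s12.1 hx
      · obtain ⟨s, hs⟩ := exists_color r α
        have hinf := blur_inf x.2 hxα hxn
        obtain ⟨l, hl⟩ := (hF.image (r α)).bddAbove
        refine ⟨(s, some (t H.1, l)), (α, some H),
          ⟨⟨hs, hinf, rfl⟩, mem_ZH_s12.2 ⟨hxα, Or.inl hxn⟩⟩, ?_⟩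
        rintro y ⟨_, hy⟩
        have hy := mem_ZH_s12.1 hy
        refine mem_ZH_s12.2 ⟨hy.1, ?_⟩
        rcases hy.2 with h1 | ⟨b, hb, h1⟩
        · exact Or.inl h1
        · refine Or.inr ⟨b, ⟨hb.1, fun hbF => hb.2 (Or.inr ⟨⟨letter_fol y.2 hy.1 h1, hb.1⟩, ?_⟩)⟩, h1⟩
          exact hl ⟨b, hbF, rfl⟩
      · obtain ⟨i, j, h1, h2⟩ := hZ (α ++ [a]) x (mem_Z_append.2 ⟨hxα, hxn⟩)
        refine ⟨i, j, h1, fun y hy => ?_⟩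
        have := mem_Z_append.1 (h2 hy)
        exact mem_ZH_s12.2 ⟨this.1, Or.inr ⟨a, ha, this.2⟩⟩
  · intro x y h
    exact Subtype.ext (blur_sep _ _ fun U hU => h _ ⟨U, hU, rfl⟩)

end

/-- If a blur shift space `Σ_Λ` is first countable and either
`V_Λ` is countable, or each `H ∈ V_Λ` has only finitely many elements appearing in
some other member of `V_Λ`, then `Σ_Λ` is metrizable. -/
theorem metrizable_of_firstCountable {A : Type*} (V : Set (Set A))
    (hV : IsBlurFamily V) (Λ : Set (ℕ → A)) (hΛ : IsShiftSpace Λ)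
    (hfc : @FirstCountableTopology (SigmaOf A V Λ) (subTau A V (SigmaOf A V Λ)))
    (hcond : (VLam A V Λ).Countable ∨
      ∀ H ∈ VLam A V Λ, (H ∩ ⋃₀ (VLam A V Λ \ {H})).Finite) :
    @TopologicalSpace.MetrizableSpace (SigmaOf A V Λ)
      (subTau A V (SigmaOf A V Λ)) := by
  have hVL : ∀ α, ∀ H ∈ V, (Fol Λ α ∩ H).Infinite → H ∈ VLam A V Λ := fun α H hH h =>
    ⟨hH, h.mono (inter_subset_inter_left _ fol_letters)⟩
  have hcnt : ∀ α, ∀ H ∈ V, (Fol Λ α ∩ H).Infinite → (Fol Λ α ∩ H).Countable :=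
    fun α H hH h => fol_countable Λ hfc α ⟨H, hH⟩ h
  rcases hcond with hc | hc
  · obtain ⟨t, ht⟩ := countable_iff_exists_injOn.1 hc
    have hU : ∀ α, (⋃ H ∈ {H | H ∈ V ∧ (Fol Λ α ∩ H).Infinite}, Fol Λ α ∩ H).Countable := by
      intro α
      refine Set.Countable.biUnion ?_ fun H hH => hcnt α H hH.1 hH.2
      exact hc.mono fun H hH => hVL α H hH.1 hH.2
    choose r hr using fun α => countable_iff_exists_injOn.1 (hU α)
    refine main_aux Λ t r ?_ ?_
    · intro G hG m
      have hs : {H | H ∈ VLam A V Λ ∧ H ≠ G ∧ t H = m}.Subsingleton :=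
        fun H hH H' hH' => ht hH.1 hH'.1 (hH.2.2.trans hH'.2.2.symm)
      rw [sUnion_eq_biUnion, inter_iUnion₂]
      exact hs.finite.biUnion fun H hH => hV.2 G hG.1 H hH.1.1 hH.2.1.symm
    · intro α H hH hi k
      refine Set.Subsingleton.finite fun a ha b hb => hr α ?_ ?_ (ha.2.trans hb.2.symm)
      · exact mem_biUnion (show H ∈ {H | H ∈ V ∧ (Fol Λ α ∩ H).Infinite} from ⟨hH, hi⟩) ha.1
      · exact mem_biUnion (show H ∈ {H | H ∈ V ∧ (Fol Λ α ∩ H).Infinite} from ⟨hH, hi⟩) hb.1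
  · have he : ∀ α H, ∃ e : A → ℕ, H ∈ V → (Fol Λ α ∩ H).Infinite → InjOn e (Fol Λ α ∩ H) := by
      intro α H
      by_cases h : H ∈ V ∧ (Fol Λ α ∩ H).Infinite
      · obtain ⟨e, he⟩ := countable_iff_exists_injOn.1 (hcnt α H h.1 h.2)
        exact ⟨e, fun _ _ => he⟩
      · exact ⟨fun _ => 0, fun h1 h2 => (h ⟨h1, h2⟩).elim⟩
    choose e he using he
    have hrex : ∀ α a, ∃ k, ∀ H ∈ V, (Fol Λ α ∩ H).Infinite → a ∈ H →
        a ∉ H ∩ ⋃₀ (VLam A V Λ \ {H}) → k = e α H a := by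
      intro α a
      by_cases h : ∃ H ∈ V, (Fol Λ α ∩ H).Infinite ∧ a ∈ H
      · obtain ⟨G, hG, hGi, haG⟩ := h
        refine ⟨e α G a, fun H hH hi haH hn => ?_⟩
        by_cases hGH : G = H
        · rw [hGH]
        · exact (hn ⟨haH, G, ⟨hVL α G hG hGi, hGH⟩, haG⟩).elim
      · exact ⟨0, fun H hH hi haH _ => (h ⟨H, hH, hi, haH⟩).elim⟩
    choose r hr using hrex
    refine main_aux Λ (fun _ => 0) r ?_ ?_
    · intro G hG m
      refine (hc G hG).subset (inter_subset_inter_right _ (sUnion_subset_sUnion ?_))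
      exact fun H hH => ⟨hH.1, hH.2.1⟩
    · intro α H hH hi k
      have hs : {a ∈ Fol Λ α ∩ H | e α H a = k}.Finite :=
        Set.Subsingleton.finite fun a ha b hb => he α H hH hi ha.1 hb.1 (ha.2.trans hb.2.symm)
      refine ((hc H (hVL α H hH hi)).union hs).subset ?_
      rintro a ⟨ha, hk⟩
      by_cases hn : a ∈ H ∩ ⋃₀ (VLam A V Λ \ {H})
      · exact Or.inl hn
      · exact Or.inr ⟨ha, (hr α a H hH hi ha.2 hn).symm.trans hk⟩

end BlurPaper
end
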